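/- arXiv:2008.12242 — 7 statements merged into one kernel-verified Lean document; each statement's English description precedes it below -/
import Mathlib

section
/- Let f_n, f : [0,∞) → [0,∞) be càdlàg with only nonnegative jumps, equal to 0 on [1,∞), and suppose f_n → f in the Skorohod sense on [0,1]. Let c_n, c : [0,∞) → [0,1] be continuous nondecreasing functions such that: (1) there exist λ_n ∈ [0,∞) and λ ∈ [0,∞) with c_n ≡ 0 on [0,λ_n] and c ≡ 0 on [0,λ]; (2) there exist μ_n ∈ (λ_n,∞) and μ ∈ (λ,∞) with c_n ≡ 1 on [μ_n,∞) and c ≡ 1 on [μ,∞); (3) c_n is strictly increasing on [λ_n,μ_n] and c is strictly increasing on [λ,μ]. If c_n → c uniformly on compact subsets of [0,∞), then f_n ∘ c_n → f ∘ c in the Skorohod sense on [0,r] for every r > 0 that is a continuity point of f ∘ c. -/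
open MeasureTheory Set Filter Topology

noncomputable section

/-- `g n → g∞` in the Skorohod sense on `[0,r]`: there are increasing homeomorphisms
`α n` of `[0,r]` with `sup_{[0,r]} |g n ∘ α n − g∞| → 0` and `sup_{[0,r]} |α n − id| → 0`. -/
def SkorConv (g : ℕ → ℝ → ℝ) (g0 : ℝ → ℝ) (r : ℝ) : Prop :=
  ∃ α : ℕ → ℝ → ℝ,
    (∀ n, ContinuousOn (α n) (Set.Icc 0 r) ∧ StrictMonoOn (α n) (Set.Icc 0 r) ∧
      α n 0 = 0 ∧ α n r = r ∧ Set.MapsTo (α n) (Set.Icc 0 r) (Set.Icc 0 r)) ∧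
    (∀ ε > (0:ℝ), ∃ N : ℕ, ∀ n ≥ N, ∀ t ∈ Set.Icc (0:ℝ) r,
      |g n (α n t) - g0 t| < ε ∧ |α n t - t| < ε)

structure HomeoOn (β : ℝ → ℝ) (p q p' q' : ℝ) : Prop where
  cont : ContinuousOn β (Set.Icc p q)
  smono : StrictMonoOn β (Set.Icc p q)
  left : β p = p'
  right : β q = q'

lemma HomeoOn.maps {β : ℝ → ℝ} {p q p' q' : ℝ} (h : HomeoOn β p q p' q') {t : ℝ}
    (ht : t ∈ Set.Icc p q) : β t ∈ Set.Icc p' q' := by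
  have hpq : p ≤ q := ht.1.trans ht.2
  constructor
  · rw [← h.left]; exact h.smono.monotoneOn ⟨le_rfl, hpq⟩ ht ht.1
  · rw [← h.right]; exact h.smono.monotoneOn ht ⟨hpq, le_rfl⟩ ht.2

lemma HomeoOn.glue {β₁ β₂ : ℝ → ℝ} {p a q p' a' q' : ℝ} (hpa : p ≤ a) (haq : a ≤ q)
    (h₁ : HomeoOn β₁ p a p' a') (h₂ : HomeoOn β₂ a q a' q') :
    ∃ β : ℝ → ℝ, HomeoOn β p q p' q' ∧ (∀ t ∈ Set.Icc p a, β t = β₁ t) ∧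
      (∀ t ∈ Set.Icc a q, β t = β₂ t) := by
  have e₁ : ∀ t ∈ Set.Icc p a, (if t ≤ a then β₁ t else β₂ t) = β₁ t := by
    intro t ht; rw [if_pos ht.2]
  have e₂ : ∀ t ∈ Set.Icc a q, (if t ≤ a then β₁ t else β₂ t) = β₂ t := by
    intro t ht
    split_ifs with h
    · have : t = a := le_antisymm h ht.1
      rw [this, h₁.right, h₂.left]
    · rfl
  refine ⟨fun t => if t ≤ a then β₁ t else β₂ t, ?_, e₁, e₂⟩
  have hU : Set.Icc p q = Set.Icc p a ∪ Set.Icc a q := (Set.Icc_union_Icc_eq_Icc hpa haq).symm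
  refine ⟨?_, ?_, ?_, ?_⟩
  · rw [hU]
    exact ContinuousOn.union_of_isClosed (h₁.cont.congr e₁) (h₂.cont.congr e₂) isClosed_Icc isClosed_Icc
  · rw [hU]
    refine StrictMonoOn.union (c := a) ?_ ?_ (isGreatest_Icc hpa) (isLeast_Icc haq)
    · exact h₁.smono.congr (fun t ht => (e₁ t ht).symm)
    · exact h₂.smono.congr (fun t ht => (e₂ t ht).symm)
  · exact (e₁ p ⟨le_rfl, hpa⟩).trans h₁.left
  · exact (e₂ q ⟨haq, le_rfl⟩).trans h₂.right

lemma exists_linear {p q p' q' ε : ℝ} (hpq : p < q) (hpq' : p' < q')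
    (h1 : |p' - p| < ε) (h2 : |q' - q| < ε) :
    ∃ β : ℝ → ℝ, HomeoOn β p q p' q' ∧ ∀ t ∈ Set.Icc p q, |β t - t| < ε := by
  have hd : 0 < q - p := sub_pos.2 hpq
  have hd' : 0 < q' - p' := sub_pos.2 hpq'
  refine ⟨fun t => p' + (t - p) / (q - p) * (q' - p'), ⟨?_, ?_, ?_, ?_⟩, ?_⟩
  · fun_prop
  · intro x _ y _ hxy
    have : (x - p) / (q - p) < (y - p) / (q - p) := by gcongr
    have := mul_lt_mul_of_pos_right this hd'
    simpa using this
  · simp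
  · have : (q - p) / (q - p) = 1 := div_self hd.ne'
    simp [this]
  · intro t ht
    set w := (t - p) / (q - p) with hw
    have hw0 : 0 ≤ w := div_nonneg (by linarith [ht.1]) hd.le
    have hw1 : w ≤ 1 := by rw [hw, div_le_one hd]; linarith [ht.2]
    have ht' : t = p + w * (q - p) := by rw [hw]; field_simp; ring
    have : p' + w * (q' - p') - t = (1 - w) * (p' - p) + w * (q' - q) := by
      rw [ht']; ring
    show |p' + w * (q' - p') - t| < ε
    rw [this]
    rw [abs_lt] at *
    exact convex_Ioo (-ε) ε h1 h2 (by linarith) hw0 (by ring)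

lemma continuousOn_of_surj {β : ℝ → ℝ} {a b : ℝ} (hab : a ≤ b) (hm : StrictMonoOn β (Set.Icc a b))
    (hs : Set.SurjOn β (Set.Icc a b) (Set.Icc (β a) (β b))) : ContinuousOn β (Set.Icc a b) := by
  have hmap : ∀ t ∈ Set.Icc a b, β t ∈ Set.Icc (β a) (β b) := fun t ht =>
    ⟨hm.monotoneOn ⟨le_rfl, hab⟩ ht ht.1, hm.monotoneOn ht ⟨hab, le_rfl⟩ ht.2⟩
  let g : Set.Icc a b → Set.Icc (β a) (β b) := fun t => ⟨β t, hmap t t.2⟩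
  have hg : Monotone g := fun x y hxy => hm.monotoneOn x.2 y.2 hxy
  have hgs : Function.Surjective g := by
    rintro ⟨y, hy⟩
    obtain ⟨x, hx, rfl⟩ := hs hy
    exact ⟨⟨x, hx⟩, rfl⟩
  have hc : Continuous g := hg.continuous_of_surjective hgs
  rw [continuousOn_iff_continuous_domRestrict]
  exact continuous_subtype_val.comp hc

lemma skor_of_eventually (g : ℕ → ℝ → ℝ) (g0 : ℝ → ℝ) (r : ℝ)
    (h : ∀ ε > (0:ℝ), ∃ N : ℕ, ∀ n ≥ N, ∃ β : ℝ → ℝ, HomeoOn β 0 r 0 r ∧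
      ∀ t ∈ Set.Icc (0:ℝ) r, |g n (β t) - g0 t| < ε ∧ |β t - t| < ε) : SkorConv g g0 r := by
  classical
  let P : ℕ → ℕ → Prop := fun n k => ∃ β : ℝ → ℝ, HomeoOn β 0 r 0 r ∧
      ∀ t ∈ Set.Icc (0:ℝ) r, |g n (β t) - g0 t| < 1 / ((k:ℝ) + 1) ∧ |β t - t| < 1 / ((k:ℝ) + 1)
  have key : ∀ n, ∃ β : ℝ → ℝ, HomeoOn β 0 r 0 r ∧ ∀ K, K ≤ n → P n K →
      ∀ t ∈ Set.Icc (0:ℝ) r, |g n (β t) - g0 t| < 1 / ((K:ℝ) + 1) ∧ |β t - t| < 1 / ((K:ℝ) + 1) := by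
    intro n
    by_cases hP : ∃ k, k ≤ n ∧ P n k
    · obtain ⟨k, hk, hPk⟩ := hP
      obtain ⟨β, hβ, hb⟩ := Nat.findGreatest_spec (P := P n) hk hPk
      refine ⟨β, hβ, fun K hK hPK t ht => ?_⟩
      have hle : K ≤ Nat.findGreatest (P n) n := Nat.le_findGreatest hK hPK
      have : 1 / (((Nat.findGreatest (P n) n : ℕ) : ℝ) + 1) ≤ 1 / ((K:ℝ) + 1) := by
        gcongr
      exact ⟨(hb t ht).1.trans_le this, (hb t ht).2.trans_le this⟩
    · refine ⟨id, ⟨continuousOn_id, strictMonoOn_id, rfl, rfl⟩, fun K hK hPK => ?_⟩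
      exact absurd ⟨K, hK, hPK⟩ hP
  choose α hα hαb using key
  refine ⟨α, fun n => ⟨(hα n).cont, (hα n).smono, (hα n).left, (hα n).right,
    fun t ht => (hα n).maps ht⟩, fun ε hε => ?_⟩
  obtain ⟨K, hK⟩ := exists_nat_one_div_lt hε
  obtain ⟨N, hN⟩ := h (1 / ((K:ℝ) + 1)) (by positivity)
  refine ⟨max N K, fun n hn t ht => ?_⟩
  have := hαb n K ((le_max_right _ _).trans hn) (hN n ((le_max_left _ _).trans hn)) t ht
  exact ⟨this.1.trans hK, this.2.trans hK⟩

/-- composition lemma.  If the càdlàg nonnegative functions `f n`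
(with nonnegative jumps, vanishing on `[1,∞)`) converge to `f` in the Skorohod sense
on `[0,1]`, and the continuous nondecreasing time changes `c n : [0,∞) → [0,1]`
(vanishing on `[0,λ n]`, equal to `1` on `[μ n,∞)` and strictly increasing in between,
and similarly for `c`) converge to `c` uniformly on compacts, then
`f n ∘ c n → f ∘ c` in the Skorohod sense on `[0,r]` for every `r > 0` which
is a continuity point of `f ∘ c`. -/
theorem stmt4
    (f : ℝ → ℝ) (fn : ℕ → ℝ → ℝ)
    -- f, fn : [0,∞) → [0,∞) càdlàg with nonnegative jumps, vanishing on [1,∞)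
    (hf_nonneg : ∀ t ≥ (0:ℝ), 0 ≤ f t)
    (hfn_nonneg : ∀ n, ∀ t ≥ (0:ℝ), 0 ≤ fn n t)
    (hf_rc : ∀ t ≥ (0:ℝ), ContinuousWithinAt f (Set.Ici t) t)
    (hfn_rc : ∀ n, ∀ t ≥ (0:ℝ), ContinuousWithinAt (fn n) (Set.Ici t) t)
    (hf_ll : ∀ t > (0:ℝ), ∃ L, Tendsto f (𝓝[<] t) (𝓝 L) ∧ L ≤ f t)
    (hfn_ll : ∀ n, ∀ t > (0:ℝ), ∃ L, Tendsto (fn n) (𝓝[<] t) (𝓝 L) ∧ L ≤ fn n t)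
    (hf_zero : ∀ t ≥ (1:ℝ), f t = 0)
    (hfn_zero : ∀ n, ∀ t ≥ (1:ℝ), fn n t = 0)
    -- Skorohod convergence of fn to f on [0,1]
    (hfconv : SkorConv fn f 1)
    -- the time changes
    (c : ℝ → ℝ) (cn : ℕ → ℝ → ℝ)
    (hc_cont : ContinuousOn c (Set.Ici 0)) (hcn_cont : ∀ n, ContinuousOn (cn n) (Set.Ici 0))
    (hc_mono : MonotoneOn c (Set.Ici 0)) (hcn_mono : ∀ n, MonotoneOn (cn n) (Set.Ici 0))
    (hc_range : ∀ t ≥ (0:ℝ), c t ∈ Set.Icc (0:ℝ) 1)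
    (hcn_range : ∀ n, ∀ t ≥ (0:ℝ), cn n t ∈ Set.Icc (0:ℝ) 1)
    (lam mu : ℝ) (lamn mun : ℕ → ℝ)
    (hlam : 0 ≤ lam) (hlamn : ∀ n, 0 ≤ lamn n)
    (hmu : lam < mu) (hmun : ∀ n, lamn n < mun n)
    -- (1) zero at the start
    (hczero : ∀ t ∈ Set.Icc (0:ℝ) lam, c t = 0)
    (hcnzero : ∀ n, ∀ t ∈ Set.Icc (0:ℝ) (lamn n), cn n t = 0)
    -- (2) one at the end
    (hcone : ∀ t ≥ mu, c t = 1)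
    (hcnone : ∀ n, ∀ t ≥ mun n, cn n t = 1)
    -- (3) strictly increasing in between
    (hcstrict : StrictMonoOn c (Set.Icc lam mu))
    (hcnstrict : ∀ n, StrictMonoOn (cn n) (Set.Icc (lamn n) (mun n)))
    -- uniform convergence on compacts
    (hucc : ∀ r : ℝ, TendstoUniformlyOn (fun n => cn n) c atTop (Set.Icc 0 r)) :
    ∀ r > (0:ℝ), ContinuousAt (fun t => f (c t)) r →
      SkorConv (fun n t => fn n (cn n t)) (fun t => f (c t)) r := by
  intro r hr hcr
  obtain ⟨α, hα, hαc⟩ := hfconv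
  have hαH : ∀ n, HomeoOn (α n) 0 1 0 1 := fun n =>
    ⟨(hα n).1, (hα n).2.1, (hα n).2.2.1, (hα n).2.2.2.1⟩
  have hαsurj : ∀ n, ∀ v ∈ Set.Icc (0:ℝ) 1, ∃ u ∈ Set.Icc (0:ℝ) 1, α n u = v := by
    intro n v hv
    have := intermediate_value_Icc (zero_le_one) (hαH n).cont
    rw [(hαH n).left, (hαH n).right] at this
    exact this hv
  have hcN : ∀ R : ℝ, ∀ ε > (0:ℝ), ∃ N : ℕ, ∀ n ≥ N, ∀ t ∈ Set.Icc (0:ℝ) R,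
      |cn n t - c t| < ε := by
    intro R ε hε
    have := Metric.tendstoUniformlyOn_iff.1 (hucc R) ε hε
    obtain ⟨N, hN⟩ := eventually_atTop.1 this
    refine ⟨N, fun n hn t ht => ?_⟩
    have := hN n hn t ht
    rwa [dist_comm, Real.dist_eq] at this
  have hf0 : ∀ ε > (0:ℝ), ∃ δ > (0:ℝ), ∀ u, 0 ≤ u → u < δ → |f u - f 0| < ε := by
    intro ε hε
    obtain ⟨δ, hδ, h⟩ := Metric.continuousWithinAt_iff.1 (hf_rc 0 le_rfl) ε hε
    refine ⟨δ, hδ, fun u hu hu' => ?_⟩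
    have := h (x := u) hu (by rw [Real.dist_eq, sub_zero, abs_of_nonneg hu]; exact hu')
    rwa [Real.dist_eq] at this
  have hclam : c lam = 0 := hczero lam ⟨hlam, le_rfl⟩
  have hcmu : c mu = 1 := hcone mu le_rfl
  apply skor_of_eventually
  intro ε hε
  have hε4 : 0 < ε / 4 := by linarith
  rcases le_or_gt r lam with hrl | hrl
  · -- `c r = 0`
    have hcr0 : ∀ t ∈ Set.Icc (0:ℝ) r, c t = 0 := fun t ht => hczero t ⟨ht.1, ht.2.trans hrl⟩
    obtain ⟨δ, hδ, hfδ⟩ := hf0 (ε / 4) hε4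
    obtain ⟨N1, hN1⟩ := hcN r (δ / 2) (by linarith)
    obtain ⟨N2, hN2⟩ := hαc (min (δ / 2) (ε / 4)) (lt_min (by linarith) hε4)
    refine ⟨max N1 N2, fun n hn => ⟨id, ⟨continuousOn_id, strictMonoOn_id, rfl, rfl⟩,
      fun t ht => ⟨?_, by simpa using hε⟩⟩⟩
    have h1 := hN1 n ((le_max_left _ _).trans hn) t ht
    rw [hcr0 t ht] at h1 ⊢
    obtain ⟨u, hu, huv⟩ := hαsurj n (cn n t) (hcn_range n t ht.1)
    have h2 := hN2 n ((le_max_right _ _).trans hn) u hu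
    have h3 := h2.1.trans_le (min_le_right _ _)
    have h4 := h2.2.trans_le (min_le_left _ _)
    rw [huv] at h3 h4
    have h5 := hfδ u hu.1 (by rw [abs_lt] at h1 h4; linarith)
    simp only [id]
    rw [abs_lt] at *
    constructor <;> linarith
  · -- `r > lam`
    set m := min r mu with hm
    have hlm : lam < m := lt_min hrl hmu
    have hm0 : 0 < m := hlam.trans_lt hlm
    have hmr : m ≤ r := min_le_left _ _
    have hmmu : m ≤ mu := min_le_right _ _
    have hcm : c m = c r := by
      rcases le_total r mu with h | h
      · rw [hm, min_eq_left h]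
      · rw [hm, min_eq_right h, hcmu, hcone r h]
    have hcm0 : 0 < c m := by
      rw [← hclam]; exact hcstrict ⟨le_rfl, hmu.le⟩ ⟨hlm.le, hmmu⟩ hlm
    have hcmt : Tendsto c (𝓝[<] m) (𝓝 (c m)) := by
      have : ContinuousAt c m := hc_cont.continuousAt (Ici_mem_nhds hm0)
      exact this.tendsto.mono_left nhdsWithin_le_nhds
    have hcmt' : Tendsto c (𝓝[<] m) (𝓝[<] (c m)) := by
      refine tendsto_nhdsWithin_iff.2 ⟨hcmt, ?_⟩
      filter_upwards [Ioo_mem_nhdsLT hlm] with t ht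
      exact hcstrict ⟨ht.1.le, ht.2.le.trans hmmu⟩ ⟨hlm.le, hmmu⟩ ht.2
    have hfc : ContinuousAt f (c m) := by
      obtain ⟨L, hL, hLle⟩ := hf_ll (c m) hcm0
      have hLeq : L = f (c m) := by
        rcases lt_or_ge r mu with h | h
        · have hmr' : m = r := by rw [hm, min_eq_left h.le]
          have h1 : Tendsto (fun t => f (c t)) (𝓝[<] m) (𝓝 L) := hL.comp hcmt'
          have h2 : Tendsto (fun t => f (c t)) (𝓝[<] m) (𝓝 (f (c m))) := by
            rw [hmr']
            exact hcr.tendsto.mono_left nhdsWithin_le_nhds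
          exact tendsto_nhds_unique h1 h2
        · have hcm1 : c m = 1 := by rw [hcm, hcone r h]
          rw [hcm1] at hL hLle ⊢
          have h0 : 0 ≤ L := by
            refine ge_of_tendsto hL ?_
            filter_upwards [Ioo_mem_nhdsLT (zero_lt_one (α := ℝ))] with t ht
            exact hf_nonneg t ht.1.le
          rw [hf_zero 1 le_rfl] at hLle ⊢
          exact le_antisymm hLle h0
      rw [hLeq] at hL
      have h1 : ContinuousWithinAt f (Set.Iio (c m)) (c m) := hL
      have h2 := h1.union (hf_rc _ hcm0.le)
      rw [Set.Iio_union_Ici] at h2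
      exact continuousWithinAt_univ f _ |>.1 h2
    obtain ⟨d0, hd0, hfd0⟩ := hf0 (ε / 4) hε4
    obtain ⟨d1, hd1, hfd1⟩ := Metric.continuousAt_iff.1 hfc (ε / 4) hε4
    have hfd1' : ∀ u, c m - d1 < u → u < c m + d1 → |f u - f (c m)| < ε / 4 := by
      intro u h1 h2
      have := hfd1 (x := u) (by rw [Real.dist_eq, abs_lt]; constructor <;> linarith)
      rwa [Real.dist_eq] at this
    obtain ⟨a, hla, ham, hca⟩ : ∃ a, lam < a ∧ a < m ∧ c a < d0 := by
      have h1 : Tendsto c (𝓝[>] lam) (𝓝 (c lam)) :=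
        (hc_cont lam hlam).mono_left (nhdsWithin_mono _ (fun x hx => hlam.trans (le_of_lt hx)))
      rw [hclam] at h1
      obtain ⟨a, ha1, ha2⟩ := ((h1.eventually (gt_mem_nhds hd0)).and (Ioo_mem_nhdsGT hlm)).exists
      exact ⟨a, ha2.1, ha2.2, ha1⟩
    obtain ⟨b, hab, hbm, hcb⟩ : ∃ b, a < b ∧ b < m ∧ c m - d1 < c b := by
      obtain ⟨b, hb1, hb2⟩ := ((hcmt.eventually (lt_mem_nhds (sub_lt_self (c m) hd1))).and
        (Ioo_mem_nhdsLT ham)).exists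
      exact ⟨b, hb2.1, hb2.2, hb1⟩
    have ha0 : 0 < a := hlam.trans_lt hla
    have hb0 : 0 < b := ha0.trans hab
    have hbr : b < r := hbm.trans_le hmr
    obtain ⟨δ, hδ0, hδ⟩ := exists_between
      (show 0 < min (min ε (a - lam)) (m - b) from
        lt_min (lt_min hε (by linarith)) (by linarith))
    have hδε : δ < ε := hδ.trans_le ((min_le_left _ _).trans (min_le_left _ _))
    have hδa : δ < a - lam := hδ.trans_le ((min_le_left _ _).trans (min_le_right _ _))
    have hδb : δ < m - b := hδ.trans_le (min_le_right _ _)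
    -- modulus of strict increase
    obtain ⟨η, hη0, hη⟩ : ∃ η > (0:ℝ), ∀ t ∈ Set.Icc (a - δ) b, c t + η ≤ c (t + δ) := by
      have hcont : ContinuousOn (fun t => c (t + δ) - c t) (Set.Icc (a - δ) b) := by
        refine ContinuousOn.sub ?_ ?_
        · refine hc_cont.comp (by fun_prop) ?_
          intro t ht
          have := ht.1
          show 0 ≤ t + δ
          linarith
        · refine hc_cont.mono ?_
          intro t ht
          have := ht.1
          show 0 ≤ t
          linarith
      obtain ⟨t0, ht0, hmin⟩ := isCompact_Icc.exists_isMinOn ⟨b, by linarith, le_rfl⟩ hcont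
      refine ⟨c (t0 + δ) - c t0, sub_pos.2 (hcstrict ?_ ?_ (by linarith)), fun t ht => ?_⟩
      · exact ⟨by linarith [ht0.1], by linarith [ht0.2]⟩
      · exact ⟨by linarith [ht0.1], by linarith [ht0.2]⟩
      · have : c (t0 + δ) - c t0 ≤ c (t + δ) - c t := hmin ht
        linarith
    obtain ⟨N1, hN1⟩ := hcN r (min (η / 2) (d1 / 2)) (lt_min (by linarith) (by linarith))
    obtain ⟨N2, hN2⟩ := hαc (min (min (η / 2) (d1 / 2)) (ε / 4))
      (lt_min (lt_min (by linarith) (by linarith)) hε4)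
    refine ⟨max N1 N2, fun n hn => ?_⟩
    have hcn : ∀ t ∈ Set.Icc (0:ℝ) r, |cn n t - c t| < η / 2 ∧ |cn n t - c t| < d1 / 2 :=
      fun t ht => lt_min_iff.1 (hN1 n ((le_max_left _ _).trans hn) t ht)
    have hαn : ∀ u ∈ Set.Icc (0:ℝ) 1, |fn n (α n u) - f u| < ε / 4 ∧ |α n u - u| < η / 2 ∧
        |α n u - u| < d1 / 2 := by
      intro u hu
      have h := hN2 n ((le_max_right _ _).trans hn) u hu
      have h2 := h.2.trans_le (min_le_left _ _)
      exact ⟨h.1.trans_le (min_le_right _ _), lt_min_iff.1 h2⟩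
    -- the middle part
    have hex : ∀ t, ∃ s, t ∈ Set.Icc a b → s ∈ Set.Icc (t - δ) (t + δ) ∧
        cn n s = α n (c t) := by
      intro t
      by_cases ht : t ∈ Set.Icc a b
      · obtain ⟨ht1, ht2⟩ := ht
        have hsub : Set.Icc (t - δ) (t + δ) ⊆ Set.Ici 0 := fun x hx => by
          have := hx.1
          show 0 ≤ x
          linarith
        have hI := intermediate_value_Icc (show t - δ ≤ t + δ by linarith)
          ((hcn_cont n).mono hsub)
        have hct := hc_range t (by linarith)
        have h1 := (hcn (t - δ) ⟨by linarith, by linarith⟩).1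
        have h2 := (hcn (t + δ) ⟨by linarith, by linarith⟩).1
        have h3 := (hαn (c t) hct).2.1
        have h4 := hη (t - δ) ⟨by linarith, by linarith⟩
        have h5 := hη t ⟨by linarith, by linarith⟩
        rw [sub_add_cancel] at h4
        rw [abs_lt] at h1 h2 h3
        obtain ⟨s, hs, hs'⟩ := hI (show α n (c t) ∈ _ from ⟨by linarith, by linarith⟩)
        exact ⟨s, fun _ => ⟨hs, hs'⟩⟩
      · exact ⟨0, fun h => absurd h ht⟩
    choose β2 hβ2 using hex
    have hc01 : ∀ t ∈ Set.Icc a b, 0 < c t ∧ c t < 1 := by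
      intro t ht
      have hh : t ∈ Set.Icc lam mu := ⟨by linarith [ht.1], by linarith [ht.2]⟩
      constructor
      · rw [← hclam]; exact hcstrict ⟨le_rfl, hmu.le⟩ hh (by linarith [ht.1])
      · rw [← hcmu]; exact hcstrict hh ⟨hmu.le, le_rfl⟩ (by linarith [ht.2])
    have hcs : StrictMonoOn c (Set.Icc a b) := hcstrict.mono
      (Set.Icc_subset_Icc hla.le (by linarith))
    have hcIcc : ∀ t ∈ Set.Icc a b, c t ∈ Set.Icc (0:ℝ) 1 := fun t ht =>
      ⟨(hc01 t ht).1.le, (hc01 t ht).2.le⟩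
    have hβpos : ∀ t ∈ Set.Icc a b, 0 < β2 t := fun t ht => by
      have := (hβ2 t ht).1.1
      linarith [ht.1]
    have hβs : StrictMonoOn β2 (Set.Icc a b) := by
      intro t ht t' ht' htt
      by_contra hcon
      have h1 := hcn_mono n (hβpos t' ht').le (hβpos t ht).le (not_lt.1 hcon)
      rw [(hβ2 t ht).2, (hβ2 t' ht').2] at h1
      exact absurd ((hαH n).smono (hcIcc t ht) (hcIcc t' ht') (hcs ht ht' htt)) (not_lt.2 h1)
    have hinner : ∀ s, 0 ≤ s → 0 < cn n s → cn n s < 1 → s ∈ Set.Icc (lamn n) (mun n) := by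
      intro s hs h0 h1
      constructor
      · by_contra hc
        have := hcnzero n s ⟨hs, (not_le.1 hc).le⟩
        linarith
      · by_contra hc
        have := hcnone n s (not_le.1 hc).le
        linarith
    have haI : a ∈ Set.Icc a b := ⟨le_rfl, hab.le⟩
    have hbI : b ∈ Set.Icc a b := ⟨hab.le, le_rfl⟩
    have hβsurj : Set.SurjOn β2 (Set.Icc a b) (Set.Icc (β2 a) (β2 b)) := by
      intro s hs
      have hs0 : 0 ≤ s := (hβpos a haI).le.trans hs.1
      have h1 := hcn_mono n (hβpos a haI).le hs0 hs.1
      have h2 := hcn_mono n hs0 (hβpos b hbI).le hs.2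
      rw [(hβ2 a haI).2] at h1
      rw [(hβ2 b hbI).2] at h2
      have hcc : ContinuousOn (fun t => α n (c t)) (Set.Icc a b) :=
        (hαH n).cont.comp (hc_cont.mono (fun x hx => ha0.le.trans hx.1)) hcIcc
      obtain ⟨t, ht, hts⟩ := intermediate_value_Icc hab.le hcc ⟨h1, h2⟩
      refine ⟨t, ht, ?_⟩
      have he : cn n (β2 t) = cn n s := (hβ2 t ht).2.trans hts
      have hp : 0 < cn n s := by
        rw [← hts, ← (hαH n).left]
        exact (hαH n).smono ⟨le_rfl, zero_le_one⟩ (hcIcc t ht) (hc01 t ht).1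
      have hl : cn n s < 1 := by
        rw [← hts, ← (hαH n).right]
        exact (hαH n).smono (hcIcc t ht) ⟨zero_le_one, le_rfl⟩ (hc01 t ht).2
      exact (hcnstrict n).injOn (hinner _ (hβpos t ht).le (he ▸ hp) (he ▸ hl))
        (hinner s hs0 hp hl) he
    have hH2 : HomeoOn β2 a b (β2 a) (β2 b) :=
      ⟨continuousOn_of_surj hab.le hβs hβsurj, hβs, rfl, rfl⟩
    have hclose : ∀ t ∈ Set.Icc a b, |β2 t - t| < ε := by
      intro t ht
      have := (hβ2 t ht).1
      rw [abs_lt]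
      constructor <;> linarith [this.1, this.2]
    have hβbr : β2 b < r := by
      have := (hβ2 b hbI).1.2
      linarith
    obtain ⟨β1, hH1, hcl1⟩ := exists_linear (ε := ε) ha0 (hβpos a haI) (by simpa using hε)
      (hclose a haI)
    obtain ⟨β3, hH3, hcl3⟩ := exists_linear (ε := ε) hbr hβbr (hclose b hbI) (by simpa using hε)
    obtain ⟨β4, hH4, h41, h42⟩ := HomeoOn.glue ha0.le hab.le hH1 hH2
    obtain ⟨β, hH, hβ4, hβ3⟩ := HomeoOn.glue hb0.le hbr.le hH4 hH3
    refine ⟨β, hH, fun t ht => ?_⟩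
    rcases le_total t a with hta | hta
    · have htI : t ∈ Set.Icc 0 a := ⟨ht.1, hta⟩
      rw [hβ4 t ⟨ht.1, hta.trans hab.le⟩, h41 t htI]
      refine ⟨?_, hcl1 t htI⟩
      have hmp := hH1.maps htI
      have h1 := hcn_mono n hmp.1 (hβpos a haI).le hmp.2
      rw [(hβ2 a haI).2] at h1
      obtain ⟨u, hu, huv⟩ := hαsurj n _ (hcn_range n (β1 t) hmp.1)
      rw [← huv] at h1 ⊢
      have h2 : u ≤ c a := ((hαH n).smono.le_iff_le hu (hcIcc a haI)).1 h1
      have h3 := hfd0 u hu.1 (by linarith)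
      have h4 : c t ≤ c a := hc_mono ht.1 ha0.le hta
      have h5 := hfd0 (c t) (hc_range t ht.1).1 (by linarith)
      have h6 := (hαn u hu).1
      rw [abs_lt] at *
      constructor <;> linarith
    rcases le_total t b with htb | htb
    · have htI : t ∈ Set.Icc a b := ⟨hta, htb⟩
      rw [hβ4 t ⟨ht.1, htb⟩, h42 t htI]
      refine ⟨?_, hclose t htI⟩
      rw [(hβ2 t htI).2]
      have := (hαn (c t) (hcIcc t htI)).1
      linarith
    · have htI : t ∈ Set.Icc b r := ⟨htb, ht.2⟩
      rw [hβ3 t htI]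
      refine ⟨?_, hcl3 t htI⟩
      have hmp := hH3.maps htI
      have hp0 : 0 ≤ β3 t := (hβpos b hbI).le.trans hmp.1
      have h1 := hcn_mono n (hβpos b hbI).le hp0 hmp.1
      have h1' := hcn_mono n hp0 hr.le hmp.2
      rw [(hβ2 b hbI).2] at h1
      obtain ⟨u, hu, huv⟩ := hαsurj n _ (hcn_range n (β3 t) hp0)
      rw [← huv] at h1 h1' ⊢
      have h2 : c b ≤ u := ((hαH n).smono.le_iff_le (hcIcc b hbI) hu).1 h1
      have h6 := hαn u hu
      have h7 := (hcn r ⟨hr.le, le_rfl⟩).2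
      have h3 := hfd1' u (by linarith) (by
        have := h6.2.2
        rw [abs_lt] at this h7
        linarith)
      have h4 : c b ≤ c t := hc_mono hb0.le ht.1 htb
      have h4' : c t ≤ c r := hc_mono ht.1 hr.le ht.2
      have h5 := hfd1' (c t) (by linarith) (by linarith)
      have h8 := h6.1
      rw [abs_lt] at h3 h5 h8 ⊢
      constructor <;> linarith
end
end

section
/- Fix n and x = (x_1,…,x_n) ∈ ℝⁿ, and for k ∈ {0,…,n} let B_k be the set of paths in 𝒫 = {x^σ : σ a permutation of [n]} having exactly k complete excursions below their running maximum. For any permutation σ of [k], the map φ_σ : B_k → B_k, which rearranges the k increment blocks of a path over its excursion intervals in the order σ(1),…,σ(k) (leaving the increments after the last element of 𝒵 in place), is a bijection of B_k, with inverse φ_{σ^{-1}}. -/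
open Set Filter Classical

noncomputable section

/-- The path `x^σ`: `w_0 = 0`, `w_j = Σ_{i ≤ j} x_{σ(i)}`. -/
def pathOf (n : ℕ) (x : Fin n → ℝ) (σ : Equiv.Perm (Fin n)) : ℕ → ℝ :=
  fun j => ∑ i ∈ Finset.univ.filter (fun i : Fin n => (i : ℕ) < j), x (σ i)

/-- The set `𝒵 = {j ∈ {0,…,n} : w_j = max_{i ≤ j} w_i}` of times at which the path
is at its running maximum. -/
def ladderSet (n : ℕ) (w : ℕ → ℝ) : Finset ℕ :=
  (Finset.range (n + 1)).filter (fun j => ∀ i ∈ Finset.range (j + 1), w i ≤ w j)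

/-- The number `K` of complete excursions below the maximum:
`𝒵 = {I_0 < I_1 < ⋯ < I_K}` has `K + 1` elements. -/
def numExc (n : ℕ) (w : ℕ → ℝ) : ℕ := (ladderSet n w).card - 1

/-- `I_m`, the `m`-th element of `𝒵` in increasing order (junk value `0` if out of range). -/
def ladderIdx (n : ℕ) (w : ℕ → ℝ) (m : ℕ) : ℕ :=
  ((ladderSet n w).sort (· ≤ ·)).getD m 0

/-- Length of the block placed in `r`-th position (0-based) after rearranging the `k`
excursion blocks by `σ`: the `r`-th new block is the old block `σ(r)`, which covers
positions `I_{σ(r)} + 1, …, I_{σ(r)+1}`. -/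
def blockLen (n : ℕ) (w : ℕ → ℝ) (k : ℕ) (σ : Equiv.Perm (Fin k)) (r : ℕ) : ℕ :=
  if h : r < k then
    ladderIdx n w (((σ ⟨r, h⟩ : Fin k) : ℕ) + 1) - ladderIdx n w ((σ ⟨r, h⟩ : Fin k) : ℕ)
  else 0

/-- `J_m`, the right endpoint of the `m`-th new block. -/
def newEnd (n : ℕ) (w : ℕ → ℝ) (k : ℕ) (σ : Equiv.Perm (Fin k)) (m : ℕ) : ℕ :=
  ∑ r ∈ Finset.range m, blockLen n w k σ r

/-- Position in the original path from which the increment at position `p` of the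
rearranged path is taken: positions in the `m`-th new block `(J_m, J_{m+1}]` are read
from the old block `σ(m)`, i.e. from `(I_{σ(m)}, I_{σ(m)+1}]`; increments after the
last ladder time are left in place. -/
def excSource (n : ℕ) (w : ℕ → ℝ) (k : ℕ) (σ : Equiv.Perm (Fin k)) (p : ℕ) : ℕ :=
  if 1 ≤ p ∧ p ≤ newEnd n w k σ k then
    let m := sInf {m : ℕ | p ≤ newEnd n w k σ (m + 1)}
    if h : m < k then ladderIdx n w ((σ ⟨m, h⟩ : Fin k) : ℕ) + (p - newEnd n w k σ m)
    else p
  else p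

/-- `φ_σ(w)`: the path whose increments are those of `w`, with the `k` complete
excursion blocks below the maximum rearranged in the order `σ(0), …, σ(k−1)` and the
increments after the last ladder time left in place. -/
def permuteExc (n : ℕ) (k : ℕ) (σ : Equiv.Perm (Fin k)) (w : ℕ → ℝ) : ℕ → ℝ :=
  fun j => ∑ p ∈ Finset.Icc 1 j,
    (w (excSource n w k σ p) - w (excSource n w k σ p - 1))

/-- `B_k`: the set of paths in `𝒫 = {x^σ}` having exactly `k` complete excursions
below their running maximum. -/
def exbSet (n : ℕ) (x : Fin n → ℝ) (k : ℕ) : Set (ℕ → ℝ) :=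
  {w | (∃ σ : Equiv.Perm (Fin n), w = pathOf n x σ) ∧ numExc n w = k}

/-- `f 0 < ⋯ < f k` are exactly the ladder times of `w`, in block form. -/
structure IsExc (n : ℕ) (w : ℕ → ℝ) (k : ℕ) (f : ℕ → ℕ) : Prop where
  zero : f 0 = 0
  lt : ∀ m < k, f m < f (m + 1)
  le_n : f k ≤ n
  up : ∀ m < k, w (f m) ≤ w (f (m + 1))
  down : ∀ m < k, ∀ i, f m < i → i < f (m + 1) → w i < w (f m)
  tail : ∀ i, f k < i → i ≤ n → w i < w (f k)

theorem strict_of_step {k : ℕ} {f : ℕ → ℕ} (h : ∀ m < k, f m < f (m + 1)) :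
    ∀ b, b ≤ k → ∀ a < b, f a < f b := by
  intro b
  induction b with
  | zero => intro _ a ha; omega
  | succ b ih =>
    intro hb a ha
    have h1 := h b (by omega)
    rcases Nat.lt_or_ge a b with h2 | h2
    · exact (ih (by omega) a h2).trans h1
    · have : a = b := by omega
      subst this; exact h1

theorem mono_of_step {k : ℕ} {f : ℕ → ℕ} (h : ∀ m < k, f m < f (m + 1))
    {a b : ℕ} (hb : b ≤ k) (ha : a ≤ b) : f a ≤ f b := by
  rcases Nat.lt_or_ge a b with h2 | h2
  · exact (strict_of_step h b hb a h2).le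
  · have : a = b := by omega
    subst this; exact le_rfl

theorem block_exists {k : ℕ} {f : ℕ → ℕ} (h0 : f 0 = 0) (p : ℕ) (hp : 1 ≤ p) :
    p ≤ f k → ∃ m < k, ∃ t, 0 < t ∧ t ≤ f (m + 1) - f m ∧ p = f m + t := by
  induction k with
  | zero => intro hk; omega
  | succ k ih =>
    intro hk
    rcases Nat.lt_or_ge (f k) p with h2 | h2
    · exact ⟨k, by omega, p - f k, by omega, by omega, by omega⟩
    · obtain ⟨m, hm, t, h⟩ := ih h2
      exact ⟨m, by omega, t, h⟩

theorem wmono_of_step {k : ℕ} {w : ℕ → ℝ} {f : ℕ → ℕ} (h : ∀ m < k, w (f m) ≤ w (f (m + 1))) :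
    ∀ b, b ≤ k → ∀ a ≤ b, w (f a) ≤ w (f b) := by
  intro b
  induction b with
  | zero => intro _ a ha; obtain rfl : a = 0 := by omega
            exact le_rfl
  | succ b ih =>
    intro hb a ha
    have h1 := h b (by omega)
    rcases Nat.lt_or_ge b a with h2 | h2
    · obtain rfl : a = b + 1 := by omega
      exact le_rfl
    · exact (ih (by omega) a h2).trans h1

theorem mem_ladder {n : ℕ} {w : ℕ → ℝ} {j : ℕ} :
    j ∈ ladderSet n w ↔ j ≤ n ∧ ∀ i ≤ j, w i ≤ w j := by
  simp [ladderSet, Nat.lt_succ_iff]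

theorem IsExc.mem {n : ℕ} {w : ℕ → ℝ} {k : ℕ} {f : ℕ → ℕ} (h : IsExc n w k f) {m : ℕ}
    (hm : m ≤ k) : f m ∈ ladderSet n w := by
  rw [mem_ladder]
  refine ⟨(mono_of_step h.lt le_rfl hm).trans h.le_n, fun i hi => ?_⟩
  rcases Nat.eq_zero_or_pos i with rfl | hi0
  · have := wmono_of_step h.up m hm 0 (Nat.zero_le _)
    rwa [h.zero] at this
  · obtain ⟨r, hr, t, ht0, ht, rfl⟩ := block_exists h.zero i hi0 hi
    have hrlt := h.lt r (by omega)
    rcases Nat.lt_or_ge (f r + t) (f (r + 1)) with h2 | h2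
    · exact (h.down r (by omega) _ (by omega) h2).le.trans
        (wmono_of_step h.up m hm r (by omega))
    · have : f r + t = f (r + 1) := by omega
      rw [this]
      exact wmono_of_step h.up m hm _ (by omega)

theorem IsExc.ladder_eq {n : ℕ} {w : ℕ → ℝ} {k : ℕ} {f : ℕ → ℕ} (h : IsExc n w k f) :
    ladderSet n w = (Finset.range (k + 1)).image f := by
  ext j
  simp only [Finset.mem_image, Finset.mem_range]
  constructor
  · intro hj
    rw [mem_ladder] at hj
    obtain ⟨hjn, hj⟩ := hj
    rcases Nat.eq_zero_or_pos j with rfl | hj0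
    · exact ⟨0, by omega, h.zero⟩
    rcases Nat.lt_or_ge (f k) j with h2 | h2
    · exact absurd (hj (f k) h2.le) (not_le.2 (h.tail j h2 hjn))
    · obtain ⟨r, hr, t, ht0, ht, rfl⟩ := block_exists h.zero j hj0 h2
      have hrlt := h.lt r hr
      rcases Nat.lt_or_ge (f r + t) (f (r + 1)) with h3 | h3
      · exact absurd (hj (f r) (by omega)) (not_le.2 (h.down r hr _ (by omega) h3))
      · exact ⟨r + 1, by omega, by omega⟩
  · rintro ⟨m, hm, rfl⟩
    exact h.mem (by omega)

theorem IsExc.card {n : ℕ} {w : ℕ → ℝ} {k : ℕ} {f : ℕ → ℕ} (h : IsExc n w k f) :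
    (ladderSet n w).card = k + 1 := by
  rw [h.ladder_eq, Finset.card_image_of_injOn, Finset.card_range]
  intro a ha b hb hab
  simp only [Finset.coe_range, Set.mem_Iio] at ha hb
  by_contra hne
  rcases Nat.lt_or_gt_of_ne hne with h1 | h1
  · have := strict_of_step h.lt b (by omega) a h1
    omega
  · have := strict_of_step h.lt a (by omega) b h1
    omega

theorem IsExc.numExc_eq {n : ℕ} {w : ℕ → ℝ} {k : ℕ} {f : ℕ → ℕ} (h : IsExc n w k f) :
    numExc n w = k := by
  rw [numExc, h.card]; rfl

theorem ladderIdx_eq {n : ℕ} {w : ℕ → ℝ} {c : ℕ} (hc : (ladderSet n w).card = c) (m : ℕ)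
    (hm : m < c) : ladderIdx n w m = (ladderSet n w).orderEmbOfFin hc ⟨m, hm⟩ := by
  rw [Finset.orderEmbOfFin_apply, ladderIdx, List.getD_eq_getElem]
  rfl

theorem IsExc.ladderIdx_eq {n : ℕ} {w : ℕ → ℝ} {k : ℕ} {f : ℕ → ℕ} (h : IsExc n w k f) {m : ℕ}
    (hm : m ≤ k) : ladderIdx n w m = f m := by
  rw [_root_.ladderIdx_eq h.card m (by omega)]
  have := Finset.orderEmbOfFin_unique h.card (f := fun i : Fin (k + 1) => f i)
    (fun i => h.mem (by omega)) (fun a b hab => strict_of_step h.lt b (by omega) a hab)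
  exact (congrFun this ⟨m, by omega⟩).symm

theorem below_of_no_ladder {n : ℕ} {w : ℕ → ℝ} {a b : ℕ} (ha : a ∈ ladderSet n w)
    (hb : b ≤ n + 1) (hab : ∀ i, a < i → i < b → i ∉ ladderSet n w) :
    ∀ i, a < i → i < b → w i < w a := by
  intro i
  induction i using Nat.strong_induction_on with
  | _ i ih =>
    intro h1 h2
    have h3 := hab i h1 h2
    rw [mem_ladder] at h3 ha
    push Not at h3
    obtain ⟨j, hj, hj2⟩ := h3 (by omega)
    rcases Nat.lt_or_ge a j with h4 | h4
    · have : j ≠ i := by rintro rfl; exact lt_irrefl _ hj2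
      exact hj2.trans (ih j (by omega) h4 (by omega))
    · exact hj2.trans_le (ha.2 j h4)

theorem isExc_of_numExc {n : ℕ} {w : ℕ → ℝ} {k : ℕ} (h : numExc n w = k) :
    IsExc n w k (ladderIdx n w) := by
  have h0 : 0 ∈ ladderSet n w := by
    rw [mem_ladder]
    refine ⟨Nat.zero_le _, fun i hi => ?_⟩
    obtain rfl : i = 0 := by omega
    exact le_rfl
  have hc : (ladderSet n w).card = k + 1 := by
    have := Finset.card_pos.2 ⟨0, h0⟩
    unfold numExc at h
    omega
  have hmem : ∀ m ≤ k, ladderIdx n w m ∈ ladderSet n w := by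
    intro m hm
    rw [_root_.ladderIdx_eq hc m (by omega)]
    exact Finset.orderEmbOfFin_mem _ _ _
  have hlt : ∀ a b, b ≤ k → a < b → ladderIdx n w a < ladderIdx n w b := by
    intro a b hb hab
    rw [_root_.ladderIdx_eq hc a (by omega), _root_.ladderIdx_eq hc b (by omega)]
    exact ((ladderSet n w).orderEmbOfFin hc).strictMono hab
  have hsurj : ∀ j ∈ ladderSet n w, ∃ m ≤ k, j = ladderIdx n w m := by
    intro j hj
    have : j ∈ Set.range ((ladderSet n w).orderEmbOfFin hc) := by
      rw [Finset.range_orderEmbOfFin]; exact hj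
    obtain ⟨m, rfl⟩ := this
    exact ⟨m, by omega, (_root_.ladderIdx_eq hc m m.2).symm⟩
  have hle : ∀ a b, b ≤ k → a ≤ b → ladderIdx n w a ≤ ladderIdx n w b := by
    intro a b hb hab
    rcases Nat.lt_or_ge a b with h2 | h2
    · exact (hlt a b hb h2).le
    · obtain rfl : a = b := by omega
      exact le_rfl
  refine ⟨?_, fun m hm => hlt _ _ hm (by omega), (mem_ladder.1 (hmem k le_rfl)).1, ?_, ?_, ?_⟩
  · obtain ⟨m, hm, hm2⟩ := hsurj 0 h0
    have := hle 0 m hm (by omega)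
    omega
  · intro m hm
    exact (mem_ladder.1 (hmem (m + 1) hm)).2 _ (hlt _ _ hm (by omega)).le
  · intro m hm
    have := (mem_ladder.1 (hmem (m + 1) hm)).1
    refine below_of_no_ladder (hmem m hm.le) (by omega) ?_
    intro i h1 h2 h3
    obtain ⟨j, hj, rfl⟩ := hsurj i h3
    rcases Nat.lt_or_ge m j with h4 | h4
    · have := hle (m + 1) j hj (by omega)
      omega
    · have := hle j m (by omega) (by omega)
      omega
  · intro i h1 h2
    refine below_of_no_ladder (hmem k le_rfl) le_rfl ?_ i h1 (by omega)
    intro i h1 h2 h3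
    obtain ⟨j, hj, rfl⟩ := hsurj i h3
    have := hle j k (by omega) (by omega)
    omega


section Rearr

variable {n : ℕ} {w : ℕ → ℝ} {k : ℕ} (σ : Equiv.Perm (Fin k))

theorem newEnd_zero : newEnd n w k σ 0 = 0 := by simp [newEnd]

theorem newEnd_succ (m : ℕ) (hm : m < k) : newEnd n w k σ (m + 1) = newEnd n w k σ m +
    (ladderIdx n w ((σ ⟨m, hm⟩ : Fin k) + 1) - ladderIdx n w (σ ⟨m, hm⟩ : Fin k)) := by
  simp [newEnd, Finset.sum_range_succ, blockLen, hm]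

theorem newEnd_mono {a b : ℕ} (h : a ≤ b) : newEnd n w k σ a ≤ newEnd n w k σ b :=
  Finset.sum_le_sum_of_subset (Finset.range_subset_range.2 h)

theorem newEnd_last (h : IsExc n w k (ladderIdx n w)) :
    newEnd n w k σ k = ladderIdx n w k := by
  have h1 : newEnd n w k σ k = ∑ i : Fin k,
      (ladderIdx n w ((σ i : ℕ) + 1) - ladderIdx n w (σ i : ℕ)) := by
    rw [newEnd, Finset.sum_range]
    refine Finset.sum_congr rfl fun i _ => ?_
    simp [blockLen]
  rw [h1, Equiv.sum_comp σ (fun i : Fin k => ladderIdx n w ((i : ℕ) + 1) - ladderIdx n w (i : ℕ)),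
    ← Finset.sum_range (fun i => ladderIdx n w (i + 1) - ladderIdx n w i)]
  have : ∀ b ≤ k, ∑ i ∈ Finset.range b, (ladderIdx n w (i + 1) - ladderIdx n w i)
      = ladderIdx n w b := by
    intro b
    induction b with
    | zero => intro _; simp [h.zero]
    | succ b ih =>
      intro hb
      rw [Finset.sum_range_succ, ih (by omega)]
      have := h.lt b hb
      omega
  exact this k le_rfl

theorem newEnd_lt (h : IsExc n w k (ladderIdx n w)) (m : ℕ) (hm : m < k) :
    newEnd n w k σ m < newEnd n w k σ (m + 1) := by
  rw [newEnd_succ σ m hm]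
  have := h.lt _ (σ ⟨m, hm⟩).2
  omega

theorem excSource_block (m t : ℕ) (hm : m < k) (ht0 : 0 < t)
    (ht : t ≤ newEnd n w k σ (m + 1) - newEnd n w k σ m) :
    excSource n w k σ (newEnd n w k σ m + t) = ladderIdx n w (σ ⟨m, hm⟩ : Fin k) + t := by
  have hle : newEnd n w k σ m + t ≤ newEnd n w k σ (m + 1) := by
    have := newEnd_mono (n := n) (w := w) σ (show m ≤ m + 1 by omega)
    omega
  have hs : sInf {r : ℕ | newEnd n w k σ m + t ≤ newEnd n w k σ (r + 1)} = m := by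
    apply IsLeast.csInf_eq
    refine ⟨hle, fun r hr => ?_⟩
    by_contra hlt
    have hr' : newEnd n w k σ m + t ≤ newEnd n w k σ (r + 1) := hr
    have := newEnd_mono (n := n) (w := w) σ (show r + 1 ≤ m by omega)
    omega
  have hk := newEnd_mono (n := n) (w := w) σ (show m + 1 ≤ k by omega)
  unfold excSource
  rw [if_pos ⟨by omega, by omega⟩]
  simp only [hs, hm, dif_pos, Nat.add_sub_cancel_left]

theorem excSource_tail (p : ℕ) (hp : newEnd n w k σ k < p) : excSource n w k σ p = p := by
  unfold excSource
  rw [if_neg (by omega)]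

theorem excSource_pos (h : IsExc n w k (ladderIdx n w)) (p : ℕ) (hp : 1 ≤ p) :
    1 ≤ excSource n w k σ p := by
  rcases Nat.lt_or_ge (newEnd n w k σ k) p with h2 | h2
  · rwa [excSource_tail σ p h2]
  · obtain ⟨m, hm, t, ht0, ht, rfl⟩ := block_exists (newEnd_zero σ) p hp h2
    rw [excSource_block σ m t hm ht0 ht]
    omega

theorem excSource_le (h : IsExc n w k (ladderIdx n w)) (p : ℕ) (hp : 1 ≤ p) (hpn : p ≤ n) :
    excSource n w k σ p ≤ n := by
  rcases Nat.lt_or_ge (newEnd n w k σ k) p with h2 | h2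
  · rwa [excSource_tail σ p h2]
  · obtain ⟨m, hm, t, ht0, ht, rfl⟩ := block_exists (newEnd_zero σ) p hp h2
    rw [excSource_block σ m t hm ht0 ht]
    rw [newEnd_succ σ m hm] at ht
    have h3 := mono_of_step h.lt le_rfl (show ((σ ⟨m, hm⟩ : Fin k) : ℕ) + 1 ≤ k from (σ ⟨m, hm⟩).2)
    have h4 := h.lt _ (σ ⟨m, hm⟩).2
    have h5 := h.le_n
    omega

theorem permuteExc_succ (j : ℕ) : permuteExc n k σ w (j + 1) = permuteExc n k σ w j +
    (w (excSource n w k σ (j + 1)) - w (excSource n w k σ (j + 1) - 1)) := by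
  unfold permuteExc
  rw [Finset.sum_Icc_succ_top (by omega)]

theorem permuteExc_block (m t : ℕ) (hm : m < k)
    (ht : t ≤ newEnd n w k σ (m + 1) - newEnd n w k σ m) :
    permuteExc n k σ w (newEnd n w k σ m + t) = permuteExc n k σ w (newEnd n w k σ m) +
      (w (ladderIdx n w (σ ⟨m, hm⟩ : Fin k) + t) - w (ladderIdx n w (σ ⟨m, hm⟩ : Fin k))) := by
  induction t with
  | zero => simp
  | succ t ih =>
    have h1 := excSource_block (n := n) (w := w) σ m (t + 1) hm (by omega) ht
    rw [← add_assoc] at h1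
    rw [← add_assoc, permuteExc_succ, ih (by omega), h1]
    rw [← add_assoc, Nat.add_sub_cancel]
    ring

theorem permuteExc_tail (t : ℕ) :
    permuteExc n k σ w (newEnd n w k σ k + t) = permuteExc n k σ w (newEnd n w k σ k) +
      (w (newEnd n w k σ k + t) - w (newEnd n w k σ k)) := by
  induction t with
  | zero => simp
  | succ t ih =>
    rw [← add_assoc, permuteExc_succ, ih, excSource_tail σ _ (by omega), Nat.add_sub_cancel]
    ring

theorem permuteExc_isExc (h : IsExc n w k (ladderIdx n w)) :
    IsExc n (permuteExc n k σ w) k (newEnd n w k σ) := by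
  have hl := newEnd_last σ h
  refine ⟨newEnd_zero σ, newEnd_lt σ h, hl ▸ h.le_n, ?_, ?_, ?_⟩
  · intro m hm
    have h1 := permuteExc_block (n := n) (w := w) σ m _ hm le_rfl
    have h2 := newEnd_succ (n := n) (w := w) σ m hm
    have h3 := h.lt _ (σ ⟨m, hm⟩).2
    have h4 := h.up _ (σ ⟨m, hm⟩).2
    have h5 : newEnd n w k σ m + (newEnd n w k σ (m + 1) - newEnd n w k σ m)
      = newEnd n w k σ (m + 1) := by omega
    have h6 : ladderIdx n w (σ ⟨m, hm⟩ : Fin k) + (newEnd n w k σ (m + 1) - newEnd n w k σ m)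
      = ladderIdx n w ((σ ⟨m, hm⟩ : Fin k) + 1) := by omega
    rw [h5, h6] at h1
    linarith
  · intro m hm i hi1 hi2
    obtain ⟨t, rfl⟩ := Nat.exists_eq_add_of_lt hi1
    have h2 := newEnd_succ (n := n) (w := w) σ m hm
    have h1 := permuteExc_block (n := n) (w := w) σ m (t + 1) hm (by omega)
    have h4 := h.down _ (σ ⟨m, hm⟩).2 (ladderIdx n w (σ ⟨m, hm⟩ : Fin k) + (t + 1))
      (by omega) (by omega)
    rw [add_assoc]
    linarith
  · intro i hi1 hi2
    obtain ⟨t, rfl⟩ := Nat.exists_eq_add_of_lt hi1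
    have h1 := permuteExc_tail (n := n) (w := w) σ (t + 1)
    have h4 := h.tail (ladderIdx n w k + (t + 1)) (by omega) (by omega)
    rw [← hl] at h4
    rw [add_assoc]
    linarith

theorem newEnd_inv (h : IsExc n w k (ladderIdx n w)) (m : ℕ) (hm : m ≤ k) :
    newEnd n (permuteExc n k σ w) k σ⁻¹ m = ladderIdx n w m := by
  have h' := permuteExc_isExc σ h
  induction m with
  | zero => rw [newEnd_zero, h.zero]
  | succ m ih =>
    have h1 := (σ⁻¹ ⟨m, hm⟩).2
    rw [newEnd_succ σ⁻¹ m hm, ih (by omega), h'.ladderIdx_eq h1, h'.ladderIdx_eq h1.le,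
      newEnd_succ σ _ h1]
    have h2 : σ ⟨((σ⁻¹ ⟨m, hm⟩ : Fin k) : ℕ), h1⟩ = ⟨m, hm⟩ := by simp
    rw [h2]
    have := h.lt m hm
    simp only
    omega

theorem excSource_inv (h : IsExc n w k (ladderIdx n w)) (p : ℕ) (hp : 1 ≤ p) :
    excSource n w k σ (excSource n (permuteExc n k σ w) k σ⁻¹ p) = p := by
  have h' := permuteExc_isExc σ h
  have hl := newEnd_last σ h
  have hk := newEnd_inv σ h k le_rfl
  rcases Nat.lt_or_ge (ladderIdx n w k) p with h2 | h2
  · rw [excSource_tail σ⁻¹ p (by omega), excSource_tail σ p (by omega)]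
  · obtain ⟨m, hm, t, ht0, ht, hpe⟩ := block_exists h.zero p hp h2
    have e1 := newEnd_inv σ h m hm.le
    have e2 := newEnd_inv σ h (m + 1) hm
    have h1 := (σ⁻¹ ⟨m, hm⟩).2
    have hs : σ ⟨((σ⁻¹ ⟨m, hm⟩ : Fin k) : ℕ), h1⟩ = ⟨m, hm⟩ := by simp
    have h3 := excSource_block (n := n) (w := permuteExc n k σ w) σ⁻¹ m t hm ht0 (by omega)
    rw [e1, ← hpe, h'.ladderIdx_eq h1.le] at h3
    have h4 := newEnd_succ (n := n) (w := w) σ _ h1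
    rw [hs] at h4
    simp only at h4
    rw [h3, excSource_block σ _ t h1 ht0 (by omega), hs, hpe]

theorem permuteExc_incr (p : ℕ) (hp : 1 ≤ p) :
    permuteExc n k σ w p - permuteExc n k σ w (p - 1) =
      w (excSource n w k σ p) - w (excSource n w k σ p - 1) := by
  obtain ⟨j, rfl⟩ : ∃ j, p = j + 1 := ⟨p - 1, by omega⟩
  rw [permuteExc_succ, Nat.add_sub_cancel]
  ring

theorem permuteExc_inv (h : IsExc n w k (ladderIdx n w)) (h0 : w 0 = 0) :
    permuteExc n k σ⁻¹ (permuteExc n k σ w) = w := by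
  have h' := permuteExc_isExc σ h
  have h'' : IsExc n (permuteExc n k σ w) k (ladderIdx n (permuteExc n k σ w)) :=
    isExc_of_numExc h'.numExc_eq
  funext j
  induction j with
  | zero => simp [permuteExc, h0]
  | succ j ih =>
    rw [permuteExc_succ, ih, permuteExc_incr σ _ (excSource_pos σ⁻¹ h'' _ (by omega)),
      excSource_inv σ h _ (by omega), Nat.add_sub_cancel]
    ring

end Rearr

theorem pathOf_zero (n : ℕ) (x : Fin n → ℝ) (τ : Equiv.Perm (Fin n)) : pathOf n x τ 0 = 0 := by
  simp [pathOf]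

theorem pathOf_succ (n : ℕ) (x : Fin n → ℝ) (τ : Equiv.Perm (Fin n)) (j : ℕ) :
    pathOf n x τ (j + 1) = pathOf n x τ j + if h : j < n then x (τ ⟨j, h⟩) else 0 := by
  unfold pathOf
  split_ifs with h
  · have : (Finset.univ.filter fun i : Fin n => (i : ℕ) < j + 1) =
        insert ⟨j, h⟩ (Finset.univ.filter fun i : Fin n => (i : ℕ) < j) := by
      ext i
      simp [Fin.ext_iff]
      omega
    rw [this, Finset.sum_insert (by simp)]
    ring
  · rw [add_zero]
    congr 1
    ext i
    simp
    omega

theorem permuteExc_path {n k : ℕ} (x : Fin n → ℝ) (σ : Equiv.Perm (Fin k))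
    (τ : Equiv.Perm (Fin n)) (h : IsExc n (pathOf n x τ) k (ladderIdx n (pathOf n x τ))) :
    ∃ τ' : Equiv.Perm (Fin n), permuteExc n k σ (pathOf n x τ) = pathOf n x τ' := by
  set w := pathOf n x τ with hw
  have h'' : IsExc n (permuteExc n k σ w) k (ladderIdx n (permuteExc n k σ w)) :=
    isExc_of_numExc (permuteExc_isExc σ h).numExc_eq
  let g : Fin n → Fin n := fun i => ⟨excSource n w k σ (i + 1) - 1, by
    have h1 := excSource_pos σ h (i + 1) (by omega)
    have h2 := excSource_le σ h (i + 1) (by omega) (by omega)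
    omega⟩
  have hg : Function.Surjective g := by
    intro i
    have h1 := excSource_pos σ⁻¹ h'' (i + 1) (by omega)
    have h2 := excSource_le σ⁻¹ h'' (i + 1) (by omega) (by omega)
    have h3 := excSource_inv σ h (i + 1) (by omega)
    refine ⟨⟨excSource n (permuteExc n k σ w) k σ⁻¹ (i + 1) - 1, by omega⟩, ?_⟩
    apply Fin.ext
    simp only [g]
    rw [Nat.sub_add_cancel h1, h3]
    simp
  let e : Equiv.Perm (Fin n) := Equiv.ofBijective g ⟨Finite.injective_iff_surjective.2 hg, hg⟩
  refine ⟨e.trans τ, ?_⟩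
  funext j
  induction j with
  | zero => simp [permuteExc, pathOf_zero]
  | succ j ih =>
    rw [permuteExc_succ, pathOf_succ, ih]
    congr 1
    by_cases hj : j < n
    · have h1 := excSource_pos σ h (j + 1) (by omega)
      have h2 := excSource_le σ h (j + 1) (by omega) (by omega)
      obtain ⟨q, hq⟩ : ∃ q, excSource n w k σ (j + 1) = q + 1 :=
        ⟨excSource n w k σ (j + 1) - 1, by omega⟩
      have hqn : q < n := by omega
      have hgq : g ⟨j, hj⟩ = ⟨q, hqn⟩ := by
        apply Fin.ext
        simp only [g]
        omega
      have he : e ⟨j, hj⟩ = g ⟨j, hj⟩ := rfl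
      rw [hq, Nat.add_sub_cancel, hw, pathOf_succ, dif_pos hqn, dif_pos hj, Equiv.trans_apply, he,
        hgq]
      ring
    · have h5 := newEnd_last σ h
      have h6 := h.le_n
      rw [excSource_tail σ _ (by omega), Nat.add_sub_cancel, hw, pathOf_succ, dif_neg hj,
        dif_neg hj]
      ring

theorem permuteExc_mapsTo (n k : ℕ) (x : Fin n → ℝ) (σ : Equiv.Perm (Fin k)) :
    Set.MapsTo (permuteExc n k σ) (exbSet n x k) (exbSet n x k) := by
  rintro w ⟨⟨τ, rfl⟩, hk⟩
  have h := isExc_of_numExc hk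
  exact ⟨permuteExc_path x σ τ h, (permuteExc_isExc σ h).numExc_eq⟩

theorem permuteExc_leftInv (n k : ℕ) (x : Fin n → ℝ) (σ : Equiv.Perm (Fin k)) :
    Set.LeftInvOn (permuteExc n k σ⁻¹) (permuteExc n k σ) (exbSet n x k) := by
  rintro w ⟨⟨τ, rfl⟩, hk⟩
  exact permuteExc_inv σ (isExc_of_numExc hk) (pathOf_zero n x τ)

/-- for any permutation `σ` of `[k]`, the rearrangement map
`φ_σ : B_k → B_k` is a bijection of `B_k`, with inverse `φ_{σ⁻¹}`. -/
theorem stmt7 (n k : ℕ) (x : Fin n → ℝ) (σ : Equiv.Perm (Fin k)) :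
    Set.BijOn (permuteExc n k σ) (exbSet n x k) (exbSet n x k) ∧
    Set.InvOn (permuteExc n k σ⁻¹) (permuteExc n k σ) (exbSet n x k) (exbSet n x k) := by
  have hinv : Set.InvOn (permuteExc n k σ⁻¹) (permuteExc n k σ) (exbSet n x k) (exbSet n x k) := by
    refine ⟨permuteExc_leftInv n k x σ, ?_⟩
    have := permuteExc_leftInv n k x σ⁻¹
    rwa [inv_inv] at this
  exact ⟨hinv.bijOn (permuteExc_mapsTo n k x σ) (permuteExc_mapsTo n k x σ⁻¹), hinv⟩
end
end

section
/- Let x = (x_1,…,x_n) ∈ ℝⁿ satisfy the different-subset-sum property: Σ_{i∈I} x_i ≠ Σ_{i∈J} x_i for all distinct subsets I ≠ J of [n]. Let π be a uniformly random permutation of [n] and W = x^π, so that W is uniform on 𝒫. Fix deterministic permutations σ_k of [k] for each k ∈ {0,…,n}, and define φ(W) = φ_{σ_k}(W) on the event that W has exactly k complete excursions below its running maximum, where φ_{σ_k} rearranges the k increment blocks of the path over its excursion intervals in the order σ_k(1),…,σ_k(k) (leaving the increments after the last element of 𝒵 in place). Then φ(W) has the same distribution as W. -/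
open MeasureTheory Set Filter Classical
open scoped ENNReal

noncomputable section

theorem aux_sort (S : Finset ℕ) (f : ℕ → ℕ) (k : ℕ)
    (hf : ∀ a, a < k → f a < f (a + 1))
    (hS : S = (Finset.range (k + 1)).image f) :
    S.card = k + 1 ∧ ∀ m, m ≤ k → (S.sort (· ≤ ·)).getD m 0 = f m := by
  have hmono : ∀ b, b ≤ k → ∀ a, a < b → f a < f b := by
    intro b
    induction b with
    | zero => intro _ a ha; omega
    | succ b ih =>
      intro hb a ha
      have h1 := hf b (by omega)
      rcases Nat.lt_succ_iff_lt_or_eq.mp ha with h | h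
      · exact (ih (by omega) a h).trans h1
      · rw [h]; exact h1
  have hcard : S.card = k + 1 := by
    rw [hS, Finset.card_image_of_injOn, Finset.card_range]
    intro a ha b hb hab
    simp only [Finset.coe_range, Set.mem_Iio] at ha hb
    rcases lt_trichotomy a b with h | h | h
    · have := hmono b (by omega) a h; omega
    · exact h
    · have := hmono a (by omega) b h; omega
  refine ⟨hcard, ?_⟩
  intro m hm
  have hu := Finset.orderEmbOfFin_unique (s := S) hcard (f := fun i : Fin (k+1) => f i)
    (by intro i; rw [hS]; exact Finset.mem_image_of_mem _ (by simp [i.2]))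
    (by intro a b hab; exact hmono b (by omega) a hab)
  have := congrFun hu ⟨m, by omega⟩
  rw [Finset.orderEmbOfFin_apply] at this
  simp only at this
  rw [this, List.getD_eq_getElem _ _ (by rw [Finset.length_sort, hcard]; omega)]
  rfl

theorem aux_ladder (n : ℕ) (w : ℕ → ℝ) (k : ℕ) (hk : numExc n w = k) :
    ladderIdx n w 0 = 0 ∧ (∀ a, a < k → ladderIdx n w a < ladderIdx n w (a + 1)) ∧
    ladderSet n w = (Finset.range (k + 1)).image (ladderIdx n w) := by
  have h0 : 0 ∈ ladderSet n w := by simp [ladderSet]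
  have hcard : (ladderSet n w).card = k + 1 := by
    have := Finset.card_pos.mpr ⟨0, h0⟩
    unfold numExc at hk; omega
  have key : ∀ m (hm : m < k + 1),
      ladderIdx n w m = (ladderSet n w).orderEmbOfFin hcard ⟨m, hm⟩ := by
    intro m hm
    rw [Finset.orderEmbOfFin_apply, ladderIdx,
      List.getD_eq_getElem _ _ (by rw [Finset.length_sort, hcard]; omega)]
    rfl
  have hmem : ladderSet n w = (Finset.range (k + 1)).image (ladderIdx n w) := by
    ext j
    simp only [Finset.mem_image, Finset.mem_range]
    rw [← Finset.mem_coe, ← Finset.range_orderEmbOfFin _ hcard]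
    constructor
    · rintro ⟨i, rfl⟩
      exact ⟨i, i.2, key i i.2⟩
    · rintro ⟨m, hm, rfl⟩
      exact ⟨⟨m, hm⟩, (key m hm).symm⟩
  have hlt : ∀ a b, a < b → b < k + 1 → ladderIdx n w a < ladderIdx n w b := by
    intro a b hab hb
    rw [key a (by omega), key b hb]
    exact ((ladderSet n w).orderEmbOfFin hcard).strictMono hab
  refine ⟨?_, fun a ha => hlt a (a+1) (by omega) (by omega), hmem⟩
  rw [hmem] at h0
  obtain ⟨m, hm, h⟩ := Finset.mem_image.mp h0
  rw [Finset.mem_range] at hm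
  rcases Nat.eq_zero_or_pos m with h' | h'
  · rw [h'] at h; exact h
  · have := hlt 0 m h' hm
    omega

theorem aux_locate (f : ℕ → ℕ) (h0 : f 0 = 0) (q : ℕ) (hq : 1 ≤ q) :
    ∀ k, q ≤ f k → ∃ a, a < k ∧ f a < q ∧ q ≤ f (a + 1) := by
  intro k
  induction k with
  | zero => intro h; omega
  | succ k ih =>
    intro h
    by_cases h' : q ≤ f k
    · obtain ⟨a, ha, h2⟩ := ih h'
      exact ⟨a, by omega, h2⟩
    · exact ⟨k, by omega, by omega, h⟩

theorem aux_below (n : ℕ) (w : ℕ → ℝ) (a b : ℕ) (ha : a ∈ ladderSet n w) (hb : b ≤ n + 1)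
    (hno : ∀ j, a < j → j < b → j ∉ ladderSet n w) :
    ∀ j, a < j → j < b → w j < w a := by
  intro j
  induction j using Nat.strong_induction_on with
  | _ j ih =>
    intro h1 h2
    by_contra hcon
    push Not at hcon
    apply hno j h1 h2
    simp only [ladderSet, Finset.mem_filter, Finset.mem_range] at ha ⊢
    refine ⟨by omega, ?_⟩
    intro i hi
    rcases Nat.lt_trichotomy i a with h | h | h
    · exact (ha.2 i (by omega)).trans hcon
    · rw [h]; exact hcon
    · rcases Nat.lt_succ_iff_lt_or_eq.mp hi with h' | h'
      · exact (ih i h' h (by omega)).le.trans hcon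
      · rw [h']

theorem aux_newEnd_succ (n : ℕ) (w : ℕ → ℝ) (k : ℕ) (σ : Equiv.Perm (Fin k)) (m : ℕ)
    (hm : m < k) : newEnd n w k σ (m + 1) = newEnd n w k σ m +
      (ladderIdx n w (((σ ⟨m, hm⟩ : Fin k) : ℕ) + 1) -
        ladderIdx n w ((σ ⟨m, hm⟩ : Fin k) : ℕ)) := by
  rw [newEnd, Finset.sum_range_succ, ← newEnd, blockLen, dif_pos hm]

theorem aux_newEnd_mono (n : ℕ) (w : ℕ → ℝ) (k : ℕ) (σ : Equiv.Perm (Fin k)) :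
    Monotone (newEnd n w k σ) := by
  apply monotone_nat_of_le_succ
  intro m
  rw [newEnd, newEnd, Finset.sum_range_succ]
  omega

theorem aux_newEnd_last (n : ℕ) (w : ℕ → ℝ) (k : ℕ) (hk : numExc n w = k)
    (σ : Equiv.Perm (Fin k)) : newEnd n w k σ k = ladderIdx n w k := by
  obtain ⟨h0, hlt, -⟩ := aux_ladder n w k hk
  have h1 : newEnd n w k σ k = ∑ r : Fin k,
      (ladderIdx n w (((σ r : Fin k) : ℕ) + 1) - ladderIdx n w ((σ r : Fin k) : ℕ)) := by
    rw [newEnd, ← Fin.sum_univ_eq_sum_range (fun r => blockLen n w k σ r)]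
    refine Finset.sum_congr rfl ?_
    intro r _
    rw [blockLen, dif_pos r.2]
  rw [h1, Equiv.sum_comp σ
    (fun r : Fin k => ladderIdx n w ((r : ℕ) + 1) - ladderIdx n w (r : ℕ)),
    Fin.sum_univ_eq_sum_range (fun r => ladderIdx n w (r + 1) - ladderIdx n w r)]
  have : ∀ m, m ≤ k → ∑ r ∈ Finset.range m, (ladderIdx n w (r + 1) - ladderIdx n w r)
      = ladderIdx n w m := by
    intro m
    induction m with
    | zero => intro _; simp [h0]
    | succ m ih =>
      intro hm
      rw [Finset.sum_range_succ, ih (by omega)]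
      have := hlt m (by omega)
      omega
  exact this k le_rfl

theorem aux_source (n : ℕ) (w : ℕ → ℝ) (k : ℕ) 
    (σ : Equiv.Perm (Fin k)) (m : ℕ) (hm : m < k) (p : ℕ)
    (h1 : newEnd n w k σ m < p) (h2 : p ≤ newEnd n w k σ (m + 1)) :
    excSource n w k σ p =
      ladderIdx n w ((σ ⟨m, hm⟩ : Fin k) : ℕ) + (p - newEnd n w k σ m) := by
  have hmono := aux_newEnd_mono n w k σ
  have hc : 1 ≤ p ∧ p ≤ newEnd n w k σ k :=
    ⟨by omega, h2.trans (hmono (by omega))⟩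
  have hs : sInf {m : ℕ | p ≤ newEnd n w k σ (m + 1)} = m := by
    apply le_antisymm
    · exact Nat.sInf_le h2
    · apply le_csInf ⟨m, h2⟩
      intro b hb
      by_contra hcon
      have : newEnd n w k σ (b + 1) ≤ newEnd n w k σ m := hmono (by omega)
      simp only [Set.mem_ofPred_eq] at hb
      omega
  unfold excSource
  rw [if_pos hc]
  simp only [hs]
  rw [dif_pos hm]

theorem aux_source_late (n : ℕ) (w : ℕ → ℝ) (k : ℕ)
    (σ : Equiv.Perm (Fin k)) (p : ℕ) (h : newEnd n w k σ k < p) :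
    excSource n w k σ p = p := by
  unfold excSource
  rw [if_neg (by omega)]

theorem aux_ladder_le (n : ℕ) (w : ℕ → ℝ) (k : ℕ) (hk : numExc n w = k) (a : ℕ) (ha : a ≤ k) :
    ladderIdx n w a ≤ n ∧ ladderIdx n w a ∈ ladderSet n w := by
  obtain ⟨-, -, hS⟩ := aux_ladder n w k hk
  have : ladderIdx n w a ∈ ladderSet n w := by
    rw [hS]; exact Finset.mem_image_of_mem _ (by simp; omega)
  refine ⟨?_, this⟩
  simp only [ladderSet, Finset.mem_filter, Finset.mem_range] at this
  omega

theorem aux_lmono (n : ℕ) (w : ℕ → ℝ) (k : ℕ) (hk : numExc n w = k) :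
    ∀ b, b ≤ k → ∀ a, a ≤ b → ladderIdx n w a ≤ ladderIdx n w b := by
  obtain ⟨h0, hlt, -⟩ := aux_ladder n w k hk
  intro b
  induction b with
  | zero => intro _ a ha; rw [Nat.le_zero.mp ha]
  | succ b ih =>
    intro hb a ha
    rcases Nat.lt_or_eq_of_le ha with h | h
    · exact (ih (by omega) a (by omega)).trans (hlt b (by omega)).le
    · rw [h]

theorem aux_perm (n : ℕ) (w : ℕ → ℝ) (k : ℕ) (hk : numExc n w = k) (σ : Equiv.Perm (Fin k)) :
    ∃ e : Equiv.Perm (Fin n), ∀ i : Fin n, (e i : ℕ) + 1 = excSource n w k σ (i + 1) := by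
  obtain ⟨h0, hlt, -⟩ := aux_ladder n w k hk
  have hlast := aux_newEnd_last n w k hk σ
  have hle := aux_ladder_le n w k hk
  have hJ0 : newEnd n w k σ 0 = 0 := by simp [newEnd]
  have hr : ∀ i : Fin n, 1 ≤ excSource n w k σ (i + 1) ∧ excSource n w k σ (i + 1) ≤ n := by
    intro i
    by_cases h : (i : ℕ) + 1 ≤ newEnd n w k σ k
    · obtain ⟨m, hm, h1, h2⟩ := aux_locate _ hJ0 (i + 1) (by omega) k h
      rw [aux_source n w k σ m hm _ h1 h2]
      rw [aux_newEnd_succ n w k σ m hm] at h2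
      have := (hle ((σ ⟨m, hm⟩ : Fin k) + 1) (by omega)).1
      have := hlt (σ ⟨m, hm⟩ : Fin k) (by omega)
      omega
    · rw [aux_source_late n w k σ _ (by omega)]
      omega
  let f : Fin n → Fin n := fun i => ⟨excSource n w k σ (i + 1) - 1, by have := hr i; omega⟩
  have hf : Function.Surjective f := by
    intro q
    by_cases h : (q : ℕ) + 1 ≤ ladderIdx n w k
    · obtain ⟨a, ha, h1, h2⟩ := aux_locate _ h0 (q + 1) (by omega) k h
      obtain ⟨m, hm⟩ := σ.surjective ⟨a, ha⟩
      have hs := aux_newEnd_succ n w k σ m m.2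
      have hm' : σ ⟨m, m.2⟩ = ⟨a, ha⟩ := hm
      rw [hm'] at hs
      simp only at hs
      have hmono : newEnd n w k σ (m + 1) ≤ newEnd n w k σ k :=
        aux_newEnd_mono n w k σ (by have := m.2; omega)
      have := (hle k le_rfl).1
      refine ⟨⟨newEnd n w k σ m + (q - ladderIdx n w a), by omega⟩, ?_⟩
      apply Fin.ext
      simp only [f]
      rw [aux_source n w k σ m m.2 _ (by omega) (by omega), hm']
      simp only
      omega
    · refine ⟨q, ?_⟩
      apply Fin.ext
      simp only [f]
      rw [aux_source_late n w k σ _ (by omega)]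
      omega
  refine ⟨Equiv.ofBijective f (Finite.injective_iff_bijective.mp
    (Finite.injective_iff_surjective.mpr hf)), ?_⟩
  intro i
  have := hr i
  simp only [Equiv.ofBijective_apply, f]
  omega

theorem aux_perm_succ (n : ℕ) (w : ℕ → ℝ) (k : ℕ) (σ : Equiv.Perm (Fin k)) (j : ℕ) :
    permuteExc n k σ w (j + 1) = permuteExc n k σ w j +
      (w (excSource n w k σ (j + 1)) - w (excSource n w k σ (j + 1) - 1)) := by
  rw [permuteExc, permuteExc, Finset.sum_Icc_succ_top (by omega)]

theorem aux_block (n : ℕ) (w : ℕ → ℝ) (k : ℕ) (σ : Equiv.Perm (Fin k)) (m : ℕ) (hm : m < k)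
    (i : ℕ) (hi : newEnd n w k σ m + i ≤ newEnd n w k σ (m + 1)) :
    permuteExc n k σ w (newEnd n w k σ m + i) = permuteExc n k σ w (newEnd n w k σ m) +
      (w (ladderIdx n w ((σ ⟨m, hm⟩ : Fin k) : ℕ) + i) -
       w (ladderIdx n w ((σ ⟨m, hm⟩ : Fin k) : ℕ))) := by
  induction i with
  | zero => simp
  | succ i ih =>
    rw [← add_assoc, aux_perm_succ, ih (by omega),
      aux_source n w k σ m hm _ (by omega) (by omega)]
    have e1 : newEnd n w k σ m + i + 1 - newEnd n w k σ m = i + 1 := by omega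
    rw [e1, ← add_assoc, Nat.add_sub_cancel]
    ring

theorem aux_tail (n : ℕ) (w : ℕ → ℝ) (k : ℕ) (σ : Equiv.Perm (Fin k)) (i : ℕ) :
    permuteExc n k σ w (newEnd n w k σ k + i) = permuteExc n k σ w (newEnd n w k σ k) +
      (w (newEnd n w k σ k + i) - w (newEnd n w k σ k)) := by
  induction i with
  | zero => simp
  | succ i ih =>
    rw [← add_assoc, aux_perm_succ, ih, aux_source_late n w k σ _ (by omega), Nat.add_sub_cancel]
    ring

theorem aux_newladder (n : ℕ) (w : ℕ → ℝ) (k : ℕ) (hk : numExc n w = k)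
    (σ : Equiv.Perm (Fin k)) :
    ladderSet n (permuteExc n k σ w) = (Finset.range (k + 1)).image (newEnd n w k σ) := by
  obtain ⟨h0, hlt, hS⟩ := aux_ladder n w k hk
  have hlast := aux_newEnd_last n w k hk σ
  have hle := aux_ladder_le n w k hk
  have hlm := aux_lmono n w k hk
  have hJ0 : newEnd n w k σ 0 = 0 := by simp [newEnd]
  have hmono := aux_newEnd_mono n w k σ
  have hA : ∀ m, m ≤ k → ∀ j, j ≤ newEnd n w k σ m →
      permuteExc n k σ w j ≤ permuteExc n k σ w (newEnd n w k σ m) := by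
    intro m
    induction m with
    | zero => intro _ j hj; rw [hJ0] at hj ⊢; rw [Nat.le_zero.mp hj]
    | succ m ih =>
      intro hm j hj
      have hm' : m < k := by omega
      have hs := aux_newEnd_succ n w k σ m hm'
      have key : ∀ i, newEnd n w k σ m + i ≤ newEnd n w k σ (m + 1) →
          permuteExc n k σ w (newEnd n w k σ m + i) ≤
            permuteExc n k σ w (newEnd n w k σ (m + 1)) := by
        intro i hi
        rw [aux_block n w k σ m hm' i hi]
        have := hlt (σ ⟨m, hm'⟩ : Fin k) (by omega)
        conv_rhs => rw [hs]
        rw [aux_block n w k σ m hm' _ hs.ge]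
        have e : ladderIdx n w ((σ ⟨m, hm'⟩ : Fin k) : ℕ) +
            (ladderIdx n w (((σ ⟨m, hm'⟩ : Fin k) : ℕ) + 1) -
              ladderIdx n w ((σ ⟨m, hm'⟩ : Fin k) : ℕ)) =
            ladderIdx n w (((σ ⟨m, hm'⟩ : Fin k) : ℕ) + 1) := by omega
        rw [e]
        have hmem := (hle ((σ ⟨m, hm'⟩ : Fin k) + 1) (by omega)).2
        simp only [ladderSet, Finset.mem_filter, Finset.mem_range] at hmem
        have := hmem.2 (ladderIdx n w ((σ ⟨m, hm'⟩ : Fin k) : ℕ) + i) (by omega)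
        linarith
      by_cases h : j ≤ newEnd n w k σ m
      · have h1 := ih (by omega) j h
        have h2 := key 0 (hmono (by omega))
        exact h1.trans h2
      · have := key (j - newEnd n w k σ m) (by omega)
        rwa [Nat.add_sub_cancel' (by omega)] at this
  ext j
  simp only [Finset.mem_image, Finset.mem_range]
  constructor
  · intro hj
    simp only [ladderSet, Finset.mem_filter, Finset.mem_range] at hj
    by_contra hcon
    push Not at hcon
    by_cases h : j ≤ newEnd n w k σ k
    · have hj1 : 1 ≤ j := by
        by_contra h'
        exact hcon 0 (by omega) (by omega)
      obtain ⟨m, hm, h1, h2⟩ := aux_locate _ hJ0 j hj1 k h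
      have h3 := hcon (m + 1) (by omega)
      have hs := aux_newEnd_succ n w k σ m hm
      have hb := aux_block n w k σ m hm (j - newEnd n w k σ m) (by omega)
      rw [Nat.add_sub_cancel' (by omega)] at hb
      have := hj.2 (newEnd n w k σ m) (by omega)
      have hl := hle ((σ ⟨m, hm⟩ : Fin k) + 1) (by omega)
      have hbel := aux_below n w _ (ladderIdx n w (((σ ⟨m, hm⟩ : Fin k) : ℕ) + 1))
        (hle (σ ⟨m, hm⟩ : Fin k) (by omega)).2 (by omega)
        (by
          intro q hq1 hq2 hq
          rw [hS] at hq
          obtain ⟨b, hb, hbq⟩ := Finset.mem_image.mp hq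
          rw [Finset.mem_range] at hb
          by_cases hc : b ≤ (σ ⟨m, hm⟩ : Fin k)
          · have := hlm (σ ⟨m, hm⟩ : Fin k) (by omega) b hc
            omega
          · have := hlm b (by omega) ((σ ⟨m, hm⟩ : Fin k) + 1) (by omega)
            omega)
        (ladderIdx n w ((σ ⟨m, hm⟩ : Fin k) : ℕ) + (j - newEnd n w k σ m))
        (by omega) (by omega)
      linarith
    · have ht := aux_tail n w k σ (j - newEnd n w k σ k)
      rw [Nat.add_sub_cancel' (by omega)] at ht
      have := hj.2 (newEnd n w k σ k) (by omega)
      have hbel := aux_below n w _ (n + 1) (hle k le_rfl).2 le_rfl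
        (by
          intro q hq1 hq2 hq
          rw [hS] at hq
          obtain ⟨b, hb, hbq⟩ := Finset.mem_image.mp hq
          rw [Finset.mem_range] at hb
          have := hlm k le_rfl b (by omega)
          omega) j (by omega) (by omega)
      rw [← hlast] at hbel
      linarith
  · rintro ⟨m, hm, rfl⟩
    simp only [ladderSet, Finset.mem_filter, Finset.mem_range]
    refine ⟨?_, fun i hi => hA m (by omega) i (by omega)⟩
    have : newEnd n w k σ m ≤ newEnd n w k σ k := hmono (by omega)
    have := (hle k le_rfl).1
    omega

theorem aux_new (n : ℕ) (w : ℕ → ℝ) (k : ℕ) (hk : numExc n w = k)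
    (σ : Equiv.Perm (Fin k)) :
    numExc n (permuteExc n k σ w) = k ∧
      ∀ m, m ≤ k → ladderIdx n (permuteExc n k σ w) m = newEnd n w k σ m := by
  obtain ⟨h0, hlt, hS⟩ := aux_ladder n w k hk
  obtain ⟨h1, h2⟩ := aux_sort _ (newEnd n w k σ) k (by
    intro a ha
    rw [aux_newEnd_succ n w k σ a ha]
    have := hlt (σ ⟨a, ha⟩ : Fin k) (by omega)
    omega) (aux_newladder n w k hk σ)
  exact ⟨by rw [numExc, h1]; rfl, h2⟩

theorem aux_recover (n : ℕ) (w₁ w₂ : ℕ → ℝ) (k : ℕ) (hk₁ : numExc n w₁ = k)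
    (hk₂ : numExc n w₂ = k) (σ : Equiv.Perm (Fin k))
    (h : permuteExc n k σ w₁ = permuteExc n k σ w₂) :
    excSource n w₁ k σ = excSource n w₂ k σ := by
  obtain ⟨h01, hlt1, -⟩ := aux_ladder n w₁ k hk₁
  obtain ⟨h02, hlt2, -⟩ := aux_ladder n w₂ k hk₂
  have hJ : ∀ m, m ≤ k → newEnd n w₁ k σ m = newEnd n w₂ k σ m := by
    intro m hm
    rw [← (aux_new n w₁ k hk₁ σ).2 m hm, ← (aux_new n w₂ k hk₂ σ).2 m hm, h]
  have hI : ∀ a, a ≤ k → ladderIdx n w₁ a = ladderIdx n w₂ a := by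
    intro a
    induction a with
    | zero => intro _; rw [h01, h02]
    | succ a ih =>
      intro ha
      have ih' := ih (by omega)
      obtain ⟨m, hm⟩ := σ.surjective ⟨a, by omega⟩
      have hm' : σ ⟨m, m.2⟩ = ⟨a, by omega⟩ := hm
      have e1 := aux_newEnd_succ n w₁ k σ m m.2
      have e2 := aux_newEnd_succ n w₂ k σ m m.2
      rw [hm'] at e1 e2
      simp only at e1 e2
      have := hJ m (by omega)
      have := hJ (m + 1) (by omega)
      have := hlt1 a (by omega)
      have := hlt2 a (by omega)
      omega
  have hJ0 : newEnd n w₁ k σ 0 = 0 := by simp [newEnd]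
  funext p
  by_cases hp : p ≤ newEnd n w₁ k σ k
  · rcases Nat.eq_zero_or_pos p with hp0 | hp0
    · subst hp0; simp [excSource]
    · obtain ⟨m, hm, h1, h2⟩ := aux_locate _ hJ0 p hp0 k hp
      rw [aux_source n w₁ k σ m hm p h1 h2]
      have h3 := hJ m (by omega)
      rw [aux_source n w₂ k σ m hm p (by omega) (by rw [← hJ (m+1) (by omega)]; exact h2),
        h3, hI _ (by omega)]
  · have := hJ k le_rfl
    rw [aux_source_late n w₁ k σ p (by omega), aux_source_late n w₂ k σ p (by omega)]

theorem aux_path_succ (n : ℕ) (x : Fin n → ℝ) (τ : Equiv.Perm (Fin n)) (j : Fin n) :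
    pathOf n x τ (j + 1) - pathOf n x τ j = x (τ j) := by
  have : (Finset.univ.filter (fun i : Fin n => (i : ℕ) < (j : ℕ) + 1)) =
      insert j (Finset.univ.filter (fun i : Fin n => (i : ℕ) < (j : ℕ))) := by
    ext i
    simp only [Finset.mem_filter, Finset.mem_univ, true_and, Finset.mem_insert, Fin.ext_iff]
    omega
  rw [pathOf, pathOf, this, Finset.sum_insert (by simp)]
  ring

theorem aux_path_late (n : ℕ) (x : Fin n → ℝ) (τ : Equiv.Perm (Fin n)) (j : ℕ) (hj : n ≤ j) :
    pathOf n x τ (j + 1) = pathOf n x τ j := by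
  rw [pathOf, pathOf]
  congr 1
  ext i
  have := i.2
  simp only [Finset.mem_filter, Finset.mem_univ, true_and]
  omega

theorem aux_path_inj (n : ℕ) (x : Fin n → ℝ)
    (hx : ∀ I J : Finset (Fin n), I ≠ J → ∑ i ∈ I, x i ≠ ∑ i ∈ J, x i) :
    Function.Injective (pathOf n x) := by
  intro τ₁ τ₂ h
  ext j
  have h1 := aux_path_succ n x τ₁ j
  rw [h, aux_path_succ] at h1
  by_contra hne
  refine hx {τ₂ j} {τ₁ j} ?_ (by simpa using h1)
  intro he
  rw [Finset.singleton_inj] at he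
  exact hne (by rw [he])

theorem aux_path_perm (n : ℕ) (x : Fin n → ℝ) (τ : Equiv.Perm (Fin n)) (k : ℕ)
    (hk : numExc n (pathOf n x τ) = k) (σ : Equiv.Perm (Fin k)) (e : Equiv.Perm (Fin n))
    (he : ∀ i : Fin n, (e i : ℕ) + 1 = excSource n (pathOf n x τ) k σ (i + 1)) :
    permuteExc n k σ (pathOf n x τ) = pathOf n x (e.trans τ) := by
  funext j
  induction j with
  | zero => simp [permuteExc, pathOf]
  | succ j ih =>
    rw [aux_perm_succ, ih]
    by_cases hj : j < n
    · have h1 := aux_path_succ n x (e.trans τ) ⟨j, hj⟩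
      have h2 := he ⟨j, hj⟩
      simp only at h1 h2
      rw [← h2, Nat.add_sub_cancel, aux_path_succ]
      simp only [Equiv.trans_apply] at h1
      linarith
    · have h1 := aux_newEnd_last n _ k hk σ
      have h2 := (aux_ladder_le n _ k hk k le_rfl).1
      rw [aux_source_late n _ k σ _ (by omega), Nat.add_sub_cancel,
        aux_path_late n x τ j (by omega), aux_path_late n x _ j (by omega)]
      ring

/-- if `x` has the different-subset-sum property, `π` is a uniform
permutation, `W = x^π`, and `φ` rearranges, on the event that `W` has exactly `k`
complete excursions below its running maximum, the excursion blocks according to a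
fixed permutation `σ_k` of `[k]`, then `φ(W)` has the same distribution as `W`. -/
theorem stmt8
    {Ω : Type*} [MeasurableSpace Ω] (P : Measure Ω) [IsProbabilityMeasure P]
    (n : ℕ) (x : Fin n → ℝ)
    -- different subset sums
    (hx : ∀ I J : Finset (Fin n), I ≠ J → ∑ i ∈ I, x i ≠ ∑ i ∈ J, x i)
    -- π is a uniform random permutation of [n]
    (π : Ω → Equiv.Perm (Fin n))
    (hπ : ∀ σ : Equiv.Perm (Fin n), P {ω | π ω = σ} = ((Nat.factorial n : ℝ≥0∞))⁻¹)
    -- a deterministic permutation σs k of [k] for every k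
    (σs : ∀ k : ℕ, Equiv.Perm (Fin k)) :
    ∀ v : ℕ → ℝ,
      P {ω | permuteExc n (numExc n (pathOf n x (π ω))) (σs (numExc n (pathOf n x (π ω))))
              (pathOf n x (π ω)) = v} =
      P {ω | pathOf n x (π ω) = v} := by
  intro v
  have hex : ∀ τ : Equiv.Perm (Fin n), ∃ e : Equiv.Perm (Fin n), ∀ i : Fin n,
      (e i : ℕ) + 1 = excSource n (pathOf n x τ) (numExc n (pathOf n x τ))
        (σs (numExc n (pathOf n x τ))) (i + 1) :=
    fun τ => aux_perm n (pathOf n x τ) _ rfl _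
  choose e he using hex
  let Φ : Equiv.Perm (Fin n) → Equiv.Perm (Fin n) := fun τ => (e τ).trans τ
  have hΦ : ∀ τ, permuteExc n (numExc n (pathOf n x τ)) (σs (numExc n (pathOf n x τ)))
      (pathOf n x τ) = pathOf n x (Φ τ) :=
    fun τ => aux_path_perm n x τ _ rfl _ (e τ) (he τ)
  have hinj : Function.Injective Φ := by
    intro τ₁ τ₂ h
    have hp := congrArg (pathOf n x) h
    rw [← hΦ, ← hΦ] at hp
    have hk : numExc n (pathOf n x τ₁) = numExc n (pathOf n x τ₂) := by
      rw [← (aux_new n (pathOf n x τ₁) _ rfl (σs _)).1,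
        ← (aux_new n (pathOf n x τ₂) _ rfl (σs _)).1, hp]
    have he1 := he τ₁
    have he2 := he τ₂
    rw [hk] at hp he1
    have hs := aux_recover n _ _ _ hk rfl _ hp
    have hee : e τ₁ = e τ₂ := by
      ext i
      have h1 := he1 i
      have h2 := he2 i
      rw [hs] at h1
      omega
    have h' : (e τ₁).trans τ₁ = (e τ₂).trans τ₂ := h
    rw [hee] at h'
    ext i
    have := congrArg (fun g : Equiv.Perm (Fin n) => g ((e τ₂).symm i)) h'
    simp only [Equiv.trans_apply, Equiv.apply_symm_apply] at this
    rw [this]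
  have hpinj := aux_path_inj n x hx
  have hsurj : Function.Surjective Φ := Finite.injective_iff_surjective.mp hinj
  simp only [hΦ]
  by_cases hv : ∃ τ, pathOf n x τ = v
  · obtain ⟨τ, rfl⟩ := hv
    obtain ⟨τ', rfl⟩ := hsurj τ
    have e1 : {ω | pathOf n x (Φ (π ω)) = pathOf n x (Φ τ')} = {ω | π ω = τ'} := by
      ext ω
      exact (hpinj.comp hinj).eq_iff
    have e2 : {ω | pathOf n x (π ω) = pathOf n x (Φ τ')} = {ω | π ω = Φ τ'} := by
      ext ω
      exact hpinj.eq_iff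
    rw [e1, e2, hπ, hπ]
  · push Not at hv
    simp [hv]
end
end

section
/- Fix a degree sequence s of size s, a natural number h ≥ 1, and u ∈ {2,…,s}. Define Φ_{h,u} : E_s → E_s as follows: given w ∈ E_s coding the tree τ_w, if the height of the vertex labeled u (in depth-first order) in τ_w is strictly greater than h, let v be the ancestor of u at distance h from u and let Φ_{h,u}(w) be the depth-first walk of the 213 transformation Ψ_{v,u}(τ_w); otherwise set Φ_{h,u}(w) = w. Then Φ_{h,u} is a bijection of E_s onto itself. -/
open Set Filter

noncomputable section

/-- The walk associated with the increment list `l`: `w_j` is the sum of the first `j`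
increments (so `w_0 = 0`). -/
def wlk (l : List ℤ) (j : ℕ) : ℤ := (l.take j).sum

/-- `l` is (the increment list of) an excursion with degree sequence `N` of size `s`:
`w_0 = 0`, `w_j ≥ 0` for `j < s`, `w_s = −1`, and exactly `N i` increments equal
`i − 1` for every `i ≥ 0`. -/
def IsExcursion (N : ℕ → ℕ) (s : ℕ) (l : List ℤ) : Prop :=
  l.length = s ∧ (∀ j < s, 0 ≤ wlk l j) ∧ wlk l s = -1 ∧
    ∀ i : ℕ, l.count ((i : ℤ) - 1) = N i

/-- `d_v`: the size of the subtree rooted at the vertex `v` (in depth-first order),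
i.e. the length of the excursion of the walk starting at `v`:
`d_v = inf{m ≥ 1 : w_{v−1+m} = w_{v−1} − 1}`. -/
def subLen (l : List ℤ) (v : ℕ) : ℕ :=
  sInf {m : ℕ | 1 ≤ m ∧ wlk l (v - 1 + m) = wlk l (v - 1) - 1}

/-- `i` is a strict ancestor of `j` in the tree coded by `l` (vertices are labeled
`1,…,s` in depth-first order): `i < j` and `j` lies in the subtree rooted at `i`. -/
def isAnc (l : List ℤ) (i j : ℕ) : Prop :=
  1 ≤ i ∧ i < j ∧ j ≤ i - 1 + subLen l i

/-- The height of vertex `j`: its distance to the root, i.e. its number of strict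
ancestors. -/
def heightOf (l : List ℤ) (j : ℕ) : ℕ := Nat.card {i : ℕ | isAnc l i j}

/-- The ancestor of `j` at distance `h` from `j` (the strict ancestor whose height is
`height(j) − h`). -/
def ancAt (l : List ℤ) (j h : ℕ) : ℕ :=
  sInf {i : ℕ | isAnc l i j ∧ heightOf l i + h = heightOf l j}

/-- The sublist of increments at the (1-based) positions `a, a+1, …, b`. -/
def seg (l : List ℤ) (a b : ℕ) : List ℤ := (l.drop (a - 1)).take (b + 1 - a)

/-- The 213 transformation `Ψ_{v,u}` on depth-first walks, for `v` a strict ancestor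
of `u`: the new tree is rooted at `v` and given by `τ(v,u)`, where at its leaf `u`
one grafts the tree obtained from `τ(1,v)` by grafting `τ(u)` at its leaf `v`.
On increment lists this reads off the five segments of `l` in the order
`[v,u−1], [1,v−1], [u,u+d_u−1], [v+d_v,s], [u+d_u,v+d_v−1]`. -/
def psi213 (l : List ℤ) (v u : ℕ) : List ℤ :=
  seg l v (u - 1) ++ seg l 1 (v - 1) ++ seg l u (u + subLen l u - 1) ++
    seg l (v + subLen l v) l.length ++ seg l (u + subLen l u) (v + subLen l v - 1)

/-- `Φ_{h,u}`: apply `Ψ_{v,u}` with `v` the ancestor of `u` at distance `h`, provided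
the height of `u` is strictly greater than `h`; otherwise do nothing. -/
def phi213 (h u : ℕ) (l : List ℤ) : List ℤ :=
  if h < heightOf l u then psi213 l (ancAt l u h) u else l

/-- First passage to `-1` of the walk started at `k`, exactly at the end of the list. -/
def Hit : ℤ → List ℤ → Prop
  | k, [] => k = -1
  | k, a :: t => 0 ≤ k ∧ Hit (k + a) t

/-- The walk started at `k` stays nonnegative, end included. -/
def Nn : ℤ → List ℤ → Prop
  | k, [] => 0 ≤ k
  | k, a :: t => 0 ≤ k ∧ Nn (k + a) t

open Classical in
/-- The number of nonempty suffixes along which the walk stays nonnegative. -/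
def ht : List ℤ → ℕ
  | [] => 0
  | a :: t => ht t + if Nn 0 (a :: t) then 1 else 0

lemma Nn.mono : ∀ {l : List ℤ} {k k' : ℤ}, Nn k l → k ≤ k' → Nn k' l
  | [], k, k', h, hk => by simp only [Nn] at *; omega
  | a :: t, k, k', h, hk => by
      simp only [Nn] at *
      exact ⟨by omega, h.2.mono (by omega)⟩

lemma Nn.start {l : List ℤ} {k : ℤ} (h : Nn k l) : 0 ≤ k := by
  cases l with
  | nil => exact h
  | cons a t => exact h.1

lemma Nn.sum : ∀ {l : List ℤ} {k : ℤ}, Nn k l → 0 ≤ k + l.sum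
  | [], k, h => by simpa [Nn] using h
  | a :: t, k, h => by
      have := h.2.sum
      simp only [List.sum_cons]; omega

lemma nn_append : ∀ {p q : List ℤ} {k : ℤ}, Nn k (p ++ q) ↔ Nn k p ∧ Nn (k + p.sum) q
  | [], q, k => by
      simp only [List.nil_append, Nn, List.sum_nil, add_zero]
      exact ⟨fun h => ⟨h.start, h⟩, fun h => h.2⟩
  | a :: t, q, k => by
      simp only [List.cons_append, Nn, List.sum_cons, nn_append (p := t), add_assoc, and_assoc]

lemma Hit.sum : ∀ {l : List ℤ} {k : ℤ}, Hit k l → k + l.sum = -1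
  | [], k, h => by simpa [Hit] using h
  | a :: t, k, h => by
      have := h.2.sum
      simp only [List.sum_cons]; omega

lemma hit_append : ∀ {p q : List ℤ} {k : ℤ}, q ≠ [] →
    (Hit k (p ++ q) ↔ (Nn k p ∧ Hit (k + p.sum) q))
  | [], q, k, hq => by
      simp only [List.nil_append, Nn, List.sum_nil, add_zero]
      refine ⟨fun h => ⟨?_, h⟩, fun h => h.2⟩
      cases q with
      | nil => exact absurd rfl hq
      | cons a t => exact h.1
  | a :: t, q, k, hq => by
      simp only [List.cons_append, Hit, Nn, List.sum_cons, hit_append (p := t) hq, add_assoc,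
        and_assoc]

lemma Hit.append : ∀ {p q : List ℤ} {i j : ℤ}, -1 ≤ j → Hit i p → Hit j q → Hit (i + j + 1) (p ++ q)
  | [], q, i, j, hj, h1, h2 => by
      simp only [Hit] at h1
      subst h1
      have : (-1 + j + 1 : ℤ) = j := by ring
      rw [this]; exact h2
  | a :: t, q, i, j, hj, h1, h2 => by
      have := Hit.append hj h1.2 h2
      refine ⟨by have := h1.1; omega, ?_⟩
      have e : i + j + 1 + a = i + a + j + 1 := by ring
      rw [e]; exact this

lemma hit_exists : ∀ (T : List ℤ) (k : ℤ), -1 ≤ k → (∀ x ∈ T, -1 ≤ x) → k + T.sum < 0 →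
    ∃ D E, T = D ++ E ∧ Hit k D
  | [], k, hk, _, hs => ⟨[], [], rfl, by simp at hs; simp only [Hit]; omega⟩
  | a :: t, k, hk, hT, hs => by
      by_cases h : k = -1
      · exact ⟨[], a :: t, rfl, h⟩
      · have ha := hT a (by simp)
        obtain ⟨D, E, e, hD⟩ := hit_exists t (k + a) (by omega)
          (fun x hx => hT x (by simp [hx])) (by simp only [List.sum_cons] at hs; omega)
        exact ⟨a :: D, E, by simp [e], by omega, hD⟩

lemma hit_iff : ∀ (l : List ℤ) (k : ℤ),
    Hit k l ↔ (∀ j < l.length, 0 ≤ k + wlk l j) ∧ k + wlk l l.length = -1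
  | [], k => by simp [Hit, wlk]
  | a :: t, k => by
      simp only [Hit, hit_iff t, List.length_cons, wlk, List.take_succ_cons, List.sum_cons,
        ← add_assoc]
      constructor
      · rintro ⟨h0, h1, h2⟩
        refine ⟨?_, h2⟩
        intro j hj
        cases j with
        | zero => simpa using h0
        | succ j => simpa [add_assoc] using h1 j (by omega)
      · rintro ⟨h1, h2⟩
        refine ⟨by simpa using h1 0 (by omega), ?_, h2⟩
        intro j hj
        simpa [add_assoc] using h1 (j + 1) (by omega)

lemma Hit.ne_nil {k : ℤ} {l : List ℤ} (hk : 0 ≤ k) (h : Hit k l) : l ≠ [] := by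
  rintro rfl
  simp only [Hit] at h; omega

lemma subLen_eq {L Q E : List ℤ} (hQ : Hit 0 Q) {v : ℕ} (hv : v = L.length + 1) :
    subLen (L ++ (Q ++ E)) v = Q.length := by
  subst hv
  have hne := hQ.ne_nil le_rfl
  have hw : ∀ m ≤ Q.length, wlk (L ++ (Q ++ E)) (L.length + 1 - 1 + m) = L.sum + wlk Q m := by
    intro m hm
    simp [wlk, List.take_append, List.take_of_length_le, Nat.sub_eq_zero_of_le hm]
  have hw0 : wlk (L ++ (Q ++ E)) (L.length + 1 - 1) = L.sum := by
    simp [wlk]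
  have h1 := (hit_iff Q 0).1 hQ
  unfold subLen
  rw [hw0]
  have hmem : Q.length ∈ {m : ℕ | 1 ≤ m ∧
      wlk (L ++ (Q ++ E)) (L.length + 1 - 1 + m) = L.sum - 1} := by
    refine ⟨List.length_pos_iff.2 hne, ?_⟩
    rw [hw _ le_rfl]; linarith [h1.2]
  apply le_antisymm
  · exact Nat.sInf_le hmem
  · apply le_csInf ⟨_, hmem⟩
    rintro m ⟨hm1, hm2⟩
    by_contra! hlt
    rw [hw _ hlt.le] at hm2
    have := h1.1 m hlt
    omega

lemma isAnc_iff {A B R : List ℤ} (hl : Hit 0 (A ++ (B ++ R))) (hx : ∀ x ∈ A ++ (B ++ R), -1 ≤ x)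
    (hB : B ≠ []) (hR : R ≠ []) {i j : ℕ} (hi : i = A.length + 1)
    (hj : j = A.length + B.length + 1) :
    isAnc (A ++ (B ++ R)) i j ↔ Nn 0 B := by
  have hT : B ++ R ≠ [] := by simp [hB]
  obtain ⟨hA, hT2⟩ := (hit_append hT).1 hl
  have hs := hT2.sum
  have hs2 := hA.sum
  obtain ⟨Q, E, e, hQ⟩ := hit_exists (B ++ R) 0 (by omega)
    (fun x h => hx x (List.mem_append_right _ h)) (by omega)
  have hsub := subLen_eq (L := A) (E := E) hQ hi
  rw [← e] at hsub
  unfold isAnc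
  rw [hsub]
  have hBl := List.length_pos_iff.2 hB
  subst hi hj
  rcases List.append_eq_append_iff.1 e with ⟨a, h1, h2⟩ | ⟨c, h1, h2⟩
  · by_cases ha : a = []
    · subst ha
      have : Q = B := by simpa using h1
      subst this
      constructor
      · intro h; omega
      · intro h; have := h.sum; have := hQ.sum; omega
    · have hal := List.length_pos_iff.2 ha
      constructor
      · intro _
        rw [h1] at hQ
        exact ((hit_append ha).1 hQ).1
      · intro _
        rw [h1, List.length_append]; omega
  · constructor
    · intro h
      rw [h1, List.length_append] at h; omega
    · intro h
      rw [h1] at h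
      have := (nn_append.1 h).1.sum; have := hQ.sum; omega

lemma isAnc_iff' {p R : List ℤ} (hl : Hit 0 (p ++ R)) (hx : ∀ x ∈ p ++ R, -1 ≤ x)
    (hR : R ≠ []) (i : ℕ) :
    isAnc (p ++ R) i (p.length + 1) ↔ ∃ A B, p = A ++ B ∧ B ≠ [] ∧ i = A.length + 1 ∧ Nn 0 B := by
  constructor
  · intro h
    have h1 := h.1
    have h2 := h.2.1
    have e : p = p.take (i - 1) ++ p.drop (i - 1) := (List.take_append_drop _ _).symm
    have hne : p.drop (i - 1) ≠ [] := by
      rw [Ne, List.drop_eq_nil_iff]; omega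
    have hlen : (p.take (i - 1)).length = i - 1 := by rw [List.length_take]; omega
    refine ⟨_, _, e, hne, by omega, ?_⟩
    have e2 : p ++ R = p.take (i - 1) ++ (p.drop (i - 1) ++ R) := by
      rw [← List.append_assoc, ← e]
    rw [e2] at hl hx h
    refine (isAnc_iff hl hx hne hR (by omega) ?_).1 h
    rw [← List.length_append, ← e]
  · rintro ⟨A, B, rfl, hB, hi, hn⟩
    rw [List.append_assoc] at *
    exact (isAnc_iff hl hx hB hR hi (by simp)).2 hn

open Classical in
lemma ht_eq (p : List ℤ) :
    ht p = ((Finset.range p.length).filter (fun i => Nn 0 (p.drop i))).card := by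
  induction p with
  | nil => simp [ht]
  | cons a t ih =>
    rw [ht, ih, Finset.card_filter, Finset.card_filter, List.length_cons,
      Finset.sum_range_succ']
    simp

lemma heightOf_eq {p R : List ℤ} (hl : Hit 0 (p ++ R)) (hx : ∀ x ∈ p ++ R, -1 ≤ x)
    (hR : R ≠ []) {j : ℕ} (hj : j = p.length + 1) : heightOf (p ++ R) j = ht p := by
  classical
  subst hj
  unfold heightOf
  have : {i : ℕ | isAnc (p ++ R) i (p.length + 1)} =
      (((Finset.range p.length).filter (fun i => Nn 0 (p.drop i))).image (· + 1) : Finset ℕ) := by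
    ext i
    simp only [Set.mem_setOf_eq, isAnc_iff' hl hx hR, Finset.coe_image, Finset.coe_filter,
      Finset.mem_range, Set.mem_image]
    constructor
    · rintro ⟨A, B, rfl, hB, hi, hn⟩
      refine ⟨A.length, ⟨?_, by simpa using hn⟩, hi.symm⟩
      have := List.length_pos_iff.2 hB
      rw [List.length_append]; omega
    · rintro ⟨k, ⟨h1, h2⟩, rfl⟩
      refine ⟨p.take k, p.drop k, by simp, ?_, ?_, h2⟩
      · rw [Ne, List.drop_eq_nil_iff]; omega
      · rw [List.length_take]; omega
  rw [this, ht_eq]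
  simp only [Finset.coe_sort_coe, Nat.card_eq_fintype_card, Fintype.card_coe]
  exact Finset.card_image_of_injective _ (add_left_injective 1)

lemma ht_append {A B : List ℤ} (hB : Nn 0 B) : ht (A ++ B) = ht A + ht B := by
  induction A with
  | nil => simp [ht]
  | cons a t ih =>
    have : Nn 0 (a :: t ++ B) ↔ Nn 0 (a :: t) := by
      rw [nn_append]
      exact ⟨fun h => h.1, fun h => ⟨h, hB.mono h.sum⟩⟩
    rw [List.cons_append] at this
    rw [List.cons_append, ht, ih, ht]
    by_cases hc : Nn 0 (a :: t)
    · rw [if_pos (this.2 hc), if_pos hc]; omega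
    · rw [if_neg (fun h => hc (this.1 h)), if_neg hc]; omega

lemma ht_pos {A : List ℤ} (hA : Nn 0 A) (hne : A ≠ []) : 0 < ht A := by
  cases A with
  | nil => exact absurd rfl hne
  | cons a t => simp [ht, hA]

lemma ht_split (p : List ℤ) (h : ℕ) (hh : h ≤ ht p) :
    ∃ A B, p = A ++ B ∧ Nn 0 B ∧ ht B = h := by
  induction p with
  | nil => exact ⟨[], [], rfl, by simp [Nn], by simp [ht] at hh ⊢; omega⟩
  | cons a t ih =>
    by_cases h1 : h ≤ ht t
    · obtain ⟨A, B, e, hB⟩ := ih h1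
      exact ⟨a :: A, B, by simp [e], hB⟩
    · by_cases hn : Nn 0 (a :: t)
      · refine ⟨[], a :: t, rfl, hn, ?_⟩
        simp only [ht, hn, if_true] at hh ⊢; omega
      · simp only [ht, hn, if_false] at hh; omega

lemma ht_unique {A B A' B' : List ℤ} (e : A ++ B = A' ++ B') (hB : Nn 0 B) (hB' : Nn 0 B')
    (hh : ht B = ht B') : A = A' := by
  rcases List.append_eq_append_iff.1 e with ⟨a, h1, h2⟩ | ⟨c, h1, h2⟩
  · by_cases ha : a = []
    · simp [h1, ha]
    · rw [h2] at hB hh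
      have := ht_pos (nn_append.1 hB).1 ha
      rw [ht_append hB'] at hh; omega
  · by_cases ha : c = []
    · simp [h1, ha]
    · rw [h2] at hB' hh
      have := ht_pos (nn_append.1 hB').1 ha
      rw [ht_append hB] at hh; omega

/-- The decomposition of an excursion into five segments. -/
structure Config (A B C D E : List ℤ) : Prop where
  nA : Nn 0 A
  nB : Nn 0 B
  A0 : A ≠ []
  B0 : B ≠ []
  hC : Hit 0 C
  hD : Hit (B.sum - 1) D
  hE : Hit (A.sum - 1) E

lemma Config.swap {A B C D E : List ℤ} (c : Config A B C D E) : Config B A C E D :=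
  ⟨c.nB, c.nA, c.B0, c.A0, c.hC, c.hE, c.hD⟩

lemma Config.hitBCD {A B C D E : List ℤ} (c : Config A B C D E) : Hit 0 (B ++ (C ++ D)) := by
  have hC := c.hC.ne_nil le_rfl
  have h2 := c.nB.sum
  have := Hit.append (by omega) c.hC c.hD
  rw [hit_append (by simp [hC])]
  refine ⟨c.nB, ?_⟩
  convert this using 1
  ring

lemma Config.hit {A B C D E : List ℤ} (c : Config A B C D E) :
    Hit 0 (A ++ (B ++ (C ++ (D ++ E)))) := by
  have h2 := c.nA.sum
  have := Hit.append (by omega) c.hitBCD c.hE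
  rw [hit_append (by simp [c.B0])]
  refine ⟨c.nA, ?_⟩
  convert this using 1
  · ring
  · simp

lemma seg_mid {X Y Z : List ℤ} {a b : ℕ} (ha : a = X.length + 1) (hb : b = X.length + Y.length) :
    seg (X ++ (Y ++ Z)) a b = Y := by
  subst ha hb
  have : X.length + Y.length + 1 - (X.length + 1) = Y.length := by omega
  simp [seg, this]

lemma Config.height {A B C D E : List ℤ} (c : Config A B C D E)
    (hx : ∀ x ∈ A ++ (B ++ (C ++ (D ++ E))), -1 ≤ x) {u : ℕ}
    (hu : u = A.length + B.length + 1) :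
    heightOf (A ++ (B ++ (C ++ (D ++ E)))) u = ht A + ht B := by
  have hl := c.hit
  rw [← List.append_assoc A] at *
  rw [heightOf_eq hl hx (by simp [c.hC.ne_nil le_rfl]) (by simp [hu]), ht_append c.nB]

lemma Config.anc {A B C D E : List ℤ} (c : Config A B C D E)
    (hx : ∀ x ∈ A ++ (B ++ (C ++ (D ++ E))), -1 ≤ x) {u : ℕ}
    (hu : u = A.length + B.length + 1) :
    ancAt (A ++ (B ++ (C ++ (D ++ E)))) u (ht B) = A.length + 1 := by
  have hC : C ++ (D ++ E) ≠ [] := by simp [c.hC.ne_nil le_rfl]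
  have hu' : u = (A ++ B).length + 1 := by simp [hu]
  unfold ancAt
  rw [c.height hx hu]
  have hl := c.hit
  have key : {i : ℕ | isAnc (A ++ (B ++ (C ++ (D ++ E)))) i u ∧
      heightOf (A ++ (B ++ (C ++ (D ++ E)))) i + ht B = ht A + ht B} = {A.length + 1} := by
    ext i
    rw [Set.mem_setOf_eq, Set.mem_singleton_iff]
    constructor
    · rintro ⟨h1, h2⟩
      rw [← List.append_assoc A] at *
      rw [hu', isAnc_iff' hl hx hC] at h1
      obtain ⟨A', B', e, hB', hi, hn⟩ := h1
      have hh := ht_append (A := A') hn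
      rw [← e, ht_append c.nB] at hh
      rw [e, List.append_assoc] at h2 hl hx
      rw [heightOf_eq hl hx (by simp [hB']) hi] at h2
      have := ht_unique e c.nB hn (by omega)
      rw [hi, this]
    · intro hi
      refine ⟨(isAnc_iff hl hx c.B0 hC hi hu).2 c.nB, ?_⟩
      rw [heightOf_eq hl hx (by simp [c.B0]) hi]
  rw [key]; simp

lemma Config.psi {A B C D E : List ℤ} (c : Config A B C D E) {u : ℕ}
    (hu : u = A.length + B.length + 1) :
    psi213 (A ++ (B ++ (C ++ (D ++ E)))) (A.length + 1) u = B ++ (A ++ (C ++ (E ++ D))) := by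
  have hv : subLen (A ++ (B ++ (C ++ (D ++ E)))) (A.length + 1)
      = B.length + C.length + D.length := by
    have := subLen_eq (L := A) (E := E) c.hitBCD rfl
    simpa [add_assoc] using this
  have hu1 : subLen (A ++ (B ++ (C ++ (D ++ E)))) u = C.length := by
    have := subLen_eq (L := A ++ B) (E := D ++ E) c.hC (v := u) (by simp [hu])
    simpa using this
  have hCl := List.length_pos_iff.2 (c.hC.ne_nil le_rfl)
  unfold psi213
  rw [hv, hu1]
  have s1 : seg (A ++ (B ++ (C ++ (D ++ E)))) (A.length + 1) (u - 1) = B :=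
    seg_mid rfl (by omega)
  have s2 : seg (A ++ (B ++ (C ++ (D ++ E)))) 1 (A.length + 1 - 1) = A :=
    seg_mid (X := []) rfl (by simp)
  have s3 : seg (A ++ (B ++ (C ++ (D ++ E)))) u (u + C.length - 1) = C := by
    have := seg_mid (X := A ++ B) (Y := C) (Z := D ++ E) (a := u) (b := u + C.length - 1)
      (by simp [hu]) (by simp; omega)
    simpa using this
  have s4 : seg (A ++ (B ++ (C ++ (D ++ E)))) (A.length + 1 + (B.length + C.length + D.length))
      (A ++ (B ++ (C ++ (D ++ E)))).length = E := by
    have := seg_mid (X := A ++ B ++ C ++ D) (Y := E) (Z := [])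
      (a := A.length + 1 + (B.length + C.length + D.length))
      (b := (A ++ (B ++ (C ++ (D ++ E)))).length) (by simp; omega) (by simp; omega)
    simpa using this
  have s5 : seg (A ++ (B ++ (C ++ (D ++ E)))) (u + C.length)
      (A.length + 1 + (B.length + C.length + D.length) - 1) = D := by
    have := seg_mid (X := A ++ B ++ C) (Y := D) (Z := E) (a := u + C.length)
      (b := A.length + 1 + (B.length + C.length + D.length) - 1)
      (by simp; omega) (by simp; omega)
    simpa using this
  rw [s1, s2, s3, s4, s5]
  simp

lemma config_exists {l : List ℤ} (hl : Hit 0 l) (hx : ∀ x ∈ l, -1 ≤ x) {h u : ℕ} (hh : 1 ≤ h)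
    (hu : 2 ≤ u) (hul : u ≤ l.length) (hlt : h < heightOf l u) :
    ∃ A B C D E, l = A ++ (B ++ (C ++ (D ++ E))) ∧ Config A B C D E ∧
      u = A.length + B.length + 1 ∧ ht B = h := by
  obtain ⟨p, R, e, hp⟩ : ∃ p R, l = p ++ R ∧ p.length + 1 = u :=
    ⟨l.take (u - 1), l.drop (u - 1), by simp, by rw [List.length_take]; omega⟩
  have hR : R ≠ [] := by
    rintro rfl
    rw [e, List.append_nil] at hul; omega
  rw [e] at hl hx hlt
  rw [heightOf_eq hl hx hR hp.symm] at hlt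
  obtain ⟨A, B, e2, hB, hhB⟩ := ht_split p h hlt.le
  rw [e2, ht_append hB] at hlt
  have hA0 : A ≠ [] := by rintro rfl; simp [ht] at hlt; omega
  have hB0 : B ≠ [] := by rintro rfl; simp [ht] at hhB; omega
  have hl' := (hit_append hR).1 hl
  rw [e2] at hl'
  have hA := (nn_append.1 hl'.1).1
  have hs := hl'.2.sum
  rw [List.sum_append] at hs
  have hsA := hA.sum
  have hsB := hB.sum
  obtain ⟨C, R', e3, hC⟩ := hit_exists R 0 (by omega)
    (fun x h => hx x (List.mem_append_right _ h)) (by omega)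
  have hsC := hC.sum
  rw [e3, List.sum_append] at hs
  obtain ⟨D, E, e4, hD⟩ := hit_exists R' (B.sum - 1) (by omega)
    (fun x h => hx x (by simp [e3, h])) (by omega)
  have hsD := hD.sum
  rw [e4, List.sum_append] at hs
  obtain ⟨E', E'', e5, hE⟩ := hit_exists E (A.sum - 1) (by omega)
    (fun x h => hx x (by simp [e3, e4, h])) (by omega)
  have c : Config A B C D E' := ⟨hA, hB, hA0, hB0, hC, hD, hE⟩
  have hE'' : E'' = [] := by
    by_contra hne
    have h1 := c.hit
    rw [e2, e3, e4, e5] at hl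
    have e6 : A ++ B ++ (C ++ (D ++ (E' ++ E''))) = (A ++ (B ++ (C ++ (D ++ E')))) ++ E'' := by
      simp
    rw [e6, hit_append hne] at hl
    have := hl.1.sum
    have := h1.sum
    omega
  refine ⟨A, B, C, D, E', ?_, c, ?_, hhB⟩
  · simp [e, e2, e3, e4, e5, hE'']
  · rw [← hp, e2, List.length_append]

lemma phi_main {l : List ℤ} (hl : Hit 0 l) (hx : ∀ x ∈ l, -1 ≤ x) {h u : ℕ} (hh : 1 ≤ h)
    (hu : 2 ≤ u) (hul : u ≤ l.length) (hlt : h < heightOf l u) :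
    (phi213 h u l).Perm l ∧ Hit 0 (phi213 h u l) ∧ heightOf (phi213 h u l) u = heightOf l u ∧
      phi213 (heightOf l u - h) u (phi213 h u l) = l := by
  obtain ⟨A, B, C, D, E, e, c, huv, hhB⟩ := config_exists hl hx hh hu hul hlt
  have hphi : phi213 h u l = B ++ (A ++ (C ++ (E ++ D))) := by
    unfold phi213
    rw [if_pos hlt]
    subst e
    rw [← hhB, c.anc hx huv, c.psi huv]
  have hperm : (B ++ (A ++ (C ++ (E ++ D)))).Perm l := by
    rw [e, List.perm_iff_count]
    intro a
    simp only [List.count_append]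
    omega
  have hx' : ∀ x ∈ B ++ (A ++ (C ++ (E ++ D))), -1 ≤ x := fun x h => hx x (hperm.mem_iff.1 h)
  have huv' : u = B.length + A.length + 1 := by omega
  have hH : heightOf l u = ht A + ht B := by
    subst e; exact c.height hx huv
  have hH' := c.swap.height hx' huv'
  have hBp := ht_pos c.nB c.B0
  rw [hphi, hH]
  refine ⟨hperm, c.swap.hit, by omega, ?_⟩
  have e1 : ht A + ht B - h = ht A := by omega
  rw [e1]
  unfold phi213
  rw [if_pos (by omega), c.swap.anc hx' huv', c.swap.psi huv', e]

lemma sum_count_le (F : Finset ℤ) (l : List ℤ) : ∑ x ∈ F, l.count x ≤ l.length := by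
  induction l with
  | nil => simp
  | cons a t ih =>
    simp only [List.count_cons, Finset.sum_add_distrib, List.length_cons]
    have : ∑ x ∈ F, (if a == x then 1 else 0) ≤ 1 := by
      simp only [beq_iff_eq, Finset.sum_ite_eq]
      split_ifs <;> simp
    omega

lemma ge_neg_one {N : ℕ → ℕ} {s : ℕ} (hNfin : (Function.support N).Finite)
    (hNsize : ∑ᶠ i, N i = s) {l : List ℤ} (hl : IsExcursion N s l) : ∀ x ∈ l, -1 ≤ x := by
  intro y hy
  by_contra! hlt
  obtain ⟨h1, -, -, h4⟩ := hl
  have hinj : Function.Injective (fun i : ℕ => (i : ℤ) - 1) := by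
    intro a b h; simp at h; exact h
  have hsum : ∑ x ∈ hNfin.toFinset.image (fun i : ℕ => (i : ℤ) - 1), l.count x = s := by
    rw [Finset.sum_image (fun a _ b _ h => hinj h), ← hNsize, finsum_eq_sum _ hNfin]
    exact Finset.sum_congr rfl (fun i _ => h4 i)
  have hnot : y ∉ hNfin.toFinset.image (fun i : ℕ => (i : ℤ) - 1) := by
    intro h
    rw [Finset.mem_image] at h
    obtain ⟨i, _, hi⟩ := h
    omega
  have := sum_count_le (insert y (hNfin.toFinset.image (fun i : ℕ => (i : ℤ) - 1))) l
  rw [Finset.sum_insert hnot, hsum] at this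
  have := List.count_pos_iff.2 hy
  omega

lemma IsExcursion.hit {N : ℕ → ℕ} {s : ℕ} {l : List ℤ} (hl : IsExcursion N s l) : Hit 0 l := by
  obtain ⟨h1, h2, h3, -⟩ := hl
  subst h1
  rw [hit_iff]
  simpa using ⟨h2, h3⟩

lemma IsExcursion.of_perm {N : ℕ → ℕ} {s : ℕ} {l l' : List ℤ} (hl : IsExcursion N s l)
    (hp : l'.Perm l) (hh : Hit 0 l') : IsExcursion N s l' := by
  obtain ⟨h1, -, -, h4⟩ := hl
  have hlen := hp.length_eq
  rw [hit_iff] at hh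
  rw [hlen, h1] at hh
  simp only [zero_add] at hh
  exact ⟨by omega, hh.1, hh.2, fun i => by rw [hp.count_eq]; exact h4 i⟩

/-- for a fixed degree sequence `N` of size `s`, `h ≥ 1` and
`u ∈ {2,…,s}`, the transformation `Φ_{h,u}` is a bijection of `E_s` onto itself. -/
theorem stmt9
    (N : ℕ → ℕ) (s : ℕ)
    (hNfin : (Function.support N).Finite)
    (hNsize : ∑ᶠ i, N i = s) (hNdeg : s = 1 + ∑ᶠ i, i * N i)
    (h : ℕ) (hh : 1 ≤ h) (u : ℕ) (hu2 : 2 ≤ u) (hus : u ≤ s) :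
    Set.BijOn (phi213 h u) {l : List ℤ | IsExcursion N s l}
      {l : List ℤ | IsExcursion N s l} := by
  have key : ∀ l, IsExcursion N s l → ∀ k, 1 ≤ k → k < heightOf l u →
      IsExcursion N s (phi213 k u l) ∧ heightOf (phi213 k u l) u = heightOf l u ∧
      phi213 (heightOf l u - k) u (phi213 k u l) = l := by
    intro l hl k hk hlt
    obtain ⟨h1, h2, h3, h4⟩ := phi_main hl.hit (ge_neg_one hNfin hNsize hl) hk hu2
      (by rw [hl.1]; exact hus) hlt
    exact ⟨hl.of_perm h1 h2, h3, h4⟩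
  have hid : ∀ l, ¬ h < heightOf l u → phi213 h u l = l := by
    intro l hl
    unfold phi213
    rw [if_neg hl]
  have hheight : ∀ l, IsExcursion N s l → heightOf (phi213 h u l) u = heightOf l u := by
    intro l hl
    by_cases hlt : h < heightOf l u
    · exact (key l hl h hh hlt).2.1
    · rw [hid l hlt]
  refine ⟨?_, ?_, ?_⟩
  · intro l hl
    by_cases hlt : h < heightOf l u
    · exact (key l hl h hh hlt).1
    · rw [hid l hlt]; exact hl
  · intro l hl l' hl' e
    have e2 : heightOf l u = heightOf l' u := by
      rw [← hheight l hl, ← hheight l' hl', e]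
    by_cases hlt : h < heightOf l u
    · have h1 := (key l hl h hh hlt).2.2
      have h2 := (key l' hl' h hh (e2 ▸ hlt)).2.2
      rw [← h1, ← h2, e, e2]
    · rw [hid l hlt, hid l' (e2 ▸ hlt)] at e
      exact e
  · intro l hl
    by_cases hlt : h < heightOf l u
    · obtain ⟨h1, h2, h3⟩ := key l hl (heightOf l u - h) (by omega) (by omega)
      refine ⟨_, h1, ?_⟩
      have : heightOf l u - (heightOf l u - h) = h := by omega
      rw [this] at h3
      exact h3
    · exact ⟨l, hl, hid l hlt⟩
end
end

section
/- Let n ∈ ℕ and let x = (x_1,…,x_n) ∈ ℝⁿ satisfy the different-subset-sum property: Σ_{i∈I} x_i ≠ Σ_{i∈J} x_i for all distinct subsets I ≠ J of [n]. Let π be a uniformly random permutation of [n] and let X be the step process on [0,1] with X_t = Σ_{i ≤ ⌊nt⌋} x_{π(i)}. Then X attains its minimum over [0,1] at a unique time ρ and its maximum at a unique time η (both multiples of 1/n), and the random vectors (X̲̲_{ρ+j/n} − X̲̲_ρ)_{0 ≤ j ≤ n−nρ} and (X̄_{d(j/n)})_{0 ≤ j ≤ nη} have the same distribution, where X̲̲_t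 = min{X_s : t ≤ s ≤ 1} is the future-minimum process, X̄_t = max{X_s : 0 ≤ s ≤ t} is the running maximum, and d(t) = inf{s ≥ t : X_s = X̄_s}. -/
open MeasureTheory Set Filter
open scoped ENNReal

noncomputable section

/-- The future-minimum `X̲̲_{j/n} = min{X_s : j/n ≤ s ≤ 1}` on the grid. -/
def futMin (n : ℕ) (w : ℕ → ℝ) (j : ℕ) : ℝ := sInf (w '' Set.Icc j n)

/-- The running maximum `X̄_{j/n} = max{X_s : 0 ≤ s ≤ j/n}` on the grid. -/
def runMax (w : ℕ → ℝ) (j : ℕ) : ℝ := sSup (w '' Set.Icc 0 j)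

/-- `nρ`: the (first) grid index at which the minimum over `[0,1]` is attained. -/
def minIdx (n : ℕ) (w : ℕ → ℝ) : ℕ := sInf {j : ℕ | j ≤ n ∧ ∀ i ≤ n, w j ≤ w i}

/-- `nη`: the (first) grid index at which the maximum over `[0,1]` is attained. -/
def maxIdx (n : ℕ) (w : ℕ → ℝ) : ℕ := sInf {j : ℕ | j ≤ n ∧ ∀ i ≤ n, w i ≤ w j}

/-- `n·d(j/n)`: the right endpoint of the excursion below the maximum straddling `j/n`,
`d(t) = inf{s ≥ t : X_s = X̄_s}`, on the grid. -/
def dIdx (w : ℕ → ℝ) (j : ℕ) : ℕ := sInf {l : ℕ | j ≤ l ∧ w l = runMax w l}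

/-- The vector `(X̲̲_{ρ+j/n} − X̲̲_ρ)_{0 ≤ j ≤ n−nρ}`, extended by constancy to all
`j ∈ ℕ` by capping the index at `n − nρ`. -/
def postMinVec (n : ℕ) (w : ℕ → ℝ) (j : ℕ) : ℝ :=
  futMin n w (minIdx n w + min j (n - minIdx n w)) - futMin n w (minIdx n w)

/-- The vector `(X̄_{d(j/n)})_{0 ≤ j ≤ nη}`, extended by constancy to all `j ∈ ℕ`
by capping the index at `nη`. -/
def maxAtDVec (n : ℕ) (w : ℕ → ℝ) (j : ℕ) : ℝ :=
  runMax w (dIdx w (min j (maxIdx n w)))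

namespace Aux11

/-- Partial sums of a list. -/
def PS (r : List ℝ) (j : ℕ) : ℝ := (r.take j).sum

/-- Ladder excursion. -/
def Lad (C : List ℝ) : Prop :=
  C ≠ [] ∧ 0 < C.sum ∧ ∀ k, 0 < k → k < C.length → PS C k < 0

/-- Negative path. -/
def Neg (A : List ℝ) : Prop := ∀ k, 0 < k → k ≤ A.length → PS A k < 0

/-- The common value of both vectors. -/
def H : List (List ℝ) → ℕ → ℝ
  | [], _ => 0
  | C :: Cs, j => if j = 0 then 0 else if j ≤ C.length then C.sum else C.sum + H Cs (j - C.length)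

lemma H_zero (Cs : List (List ℝ)) : H Cs 0 = 0 := by
  cases Cs <;> simp [H]

lemma PS_zero (r : List ℝ) : PS r 0 = 0 := by simp [PS]

lemma PS_len (r : List ℝ) {j : ℕ} (h : r.length ≤ j) : PS r j = r.sum := by
  simp [PS, List.take_of_length_le h]

lemma PS_append (C R : List ℝ) (i : ℕ) : PS (C ++ R) i = PS C i + PS R (i - C.length) := by
  simp [PS, List.take_append]

lemma PS_append_le (C R : List ℝ) {i : ℕ} (h : i ≤ C.length) : PS (C ++ R) i = PS C i := by
  rw [PS_append, Nat.sub_eq_zero_of_le h, PS_zero, add_zero]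

lemma PS_append_ge (C R : List ℝ) {i : ℕ} (h : C.length ≤ i) :
    PS (C ++ R) i = C.sum + PS R (i - C.length) := by
  rw [PS_append, PS_len C h]

lemma PS_reverse (C : List ℝ) {i : ℕ} (h : i ≤ C.length) :
    PS C.reverse i = C.sum - PS C (C.length - i) := by
  have h1 := List.sum_take_add_sum_drop C (C.length - i)
  unfold PS
  rw [List.take_reverse, List.sum_reverse]
  linarith

lemma Lad.pos {C : List ℝ} (h : Lad C) : 0 < C.length := List.length_pos_iff.2 h.1

lemma Lad.le {C : List ℝ} (h : Lad C) {i : ℕ} (hi : i < C.length) : PS C i ≤ 0 := by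
  rcases Nat.eq_zero_or_pos i with rfl | h0
  · simp [PS_zero]
  · exact (h.2.2 i h0 hi).le

lemma H_map (Ds : List (List ℝ)) (j : ℕ) : H (Ds.map List.reverse) j = H Ds j := by
  induction Ds generalizing j with
  | nil => simp [H]
  | cons C Cs ih => simp [H, ih]

lemma H_cap (Ds : List (List ℝ)) (j : ℕ) (hL : ∀ C ∈ Ds, Lad C) (hj : Ds.flatten.length ≤ j) :
    H Ds j = H Ds Ds.flatten.length := by
  induction Ds generalizing j with
  | nil => simp [H]
  | cons C Cs ih =>
    have hp := (hL C (by simp)).pos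
    have ih' := ih (j - C.length) (fun D hD => hL D (by simp [hD]))
    simp only [List.flatten_cons, List.length_append] at hj ⊢
    have e := ih' (by omega)
    simp only [H]
    rcases Nat.eq_zero_or_pos Cs.flatten.length with h0 | h0
    · rw [h0] at e ⊢
      rw [e, H_zero]
      have hj0 : j ≠ 0 := by omega
      have hC0 : C.length + 0 ≠ 0 := by omega
      rw [if_neg hj0, if_neg hC0]
      simp
    · rw [if_neg (by omega), if_neg (by omega), if_neg (by omega), if_neg (by omega), e]
      simp

lemma fut (Ds : List (List ℝ)) (hL : ∀ C ∈ Ds, Lad C) (j : ℕ) (hj : j ≤ Ds.flatten.length) :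
    IsLeast (PS (Ds.map List.reverse).flatten '' Set.Icc j Ds.flatten.length) (H Ds j) := by
  induction Ds generalizing j with
  | nil =>
    simp at hj
    subst hj
    simp [H, PS]
  | cons C Cs ih =>
    have hC := hL C (by simp)
    have hp := hC.pos
    have ih' := fun j => ih (fun D hD => hL D (by simp [hD])) j
    have h0 := (ih' 0 (by omega)).2
    rw [H_zero] at h0
    have hnn : ∀ i ≤ Cs.flatten.length, 0 ≤ PS (Cs.map List.reverse).flatten i :=
      fun i hi => h0 ⟨i, ⟨by omega, hi⟩, rfl⟩
    simp only [List.flatten_cons, List.length_append, List.map_cons] at hj ⊢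
    set R := (Cs.map List.reverse).flatten with hR
    change IsLeast (PS (C.reverse ++ R) '' Set.Icc j (C.length + Cs.flatten.length)) _
    have big : ∀ i, C.length ≤ i → PS (C.reverse ++ R) i = C.sum + PS R (i - C.length) := by
      intro i hi
      rw [PS_append_ge _ _ (by simpa using hi)]; simp
    have small : ∀ i, 0 < i → i < C.length → C.sum < PS (C.reverse ++ R) i := by
      intro i h0 hi
      rw [PS_append_le _ _ (by simpa using hi.le), PS_reverse _ hi.le]
      have := hC.2.2 (C.length - i) (by omega) (by omega)
      linarith
    have low : ∀ i, 0 < i → i ≤ C.length + Cs.flatten.length → C.sum ≤ PS (C.reverse ++ R) i := by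
      intro i h0 hi
      by_cases h : i < C.length
      · exact (small i h0 h).le
      · rw [big i (by omega)]
        have := hnn (i - C.length) (by omega)
        linarith
    simp only [H]
    split_ifs with h1 h2
    · subst h1
      refine ⟨⟨0, ⟨le_rfl, by omega⟩, PS_zero _⟩, ?_⟩
      rintro _ ⟨i, ⟨-, hi⟩, rfl⟩
      rcases Nat.eq_zero_or_pos i with rfl | hi0
      · rw [PS_zero]
      · exact hC.2.1.le.trans (low i hi0 hi)
    · refine ⟨⟨C.length, ⟨h2, by omega⟩, ?_⟩, ?_⟩
      · rw [big _ le_rfl]; simp [PS_zero]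
      rintro _ ⟨i, ⟨hji, hi⟩, rfl⟩
      exact low i (by omega) hi
    · have := ih' (j - C.length) (by omega)
      obtain ⟨⟨k, ⟨hk1, hk2⟩, hk⟩, hl⟩ := this
      refine ⟨⟨k + C.length, ⟨by omega, by omega⟩, ?_⟩, ?_⟩
      · rw [big _ (by omega), ← hk]; simp
      rintro _ ⟨i, ⟨hji, hi⟩, rfl⟩
      rw [big _ (by omega)]
      have := hl ⟨i - C.length, ⟨by omega, by omega⟩, rfl⟩
      linarith

lemma dchar (Ds : List (List ℝ)) (A : List ℝ) (hL : ∀ C ∈ Ds, Lad C) (j : ℕ)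
    (hj : j ≤ Ds.flatten.length) :
    ∃ l, j ≤ l ∧ l ≤ Ds.flatten.length ∧ PS (Ds.flatten ++ A) l = H Ds j ∧
      (∀ i ≤ l, PS (Ds.flatten ++ A) i ≤ PS (Ds.flatten ++ A) l) ∧
      (∀ i, j ≤ i → i < l → ∃ k ≤ i, PS (Ds.flatten ++ A) i < PS (Ds.flatten ++ A) k) := by
  induction Ds generalizing j with
  | nil =>
    simp at hj
    subst hj
    refine ⟨0, le_rfl, by simp, by simp [H, PS], ?_, ?_⟩
    · intro i hi
      obtain rfl : i = 0 := by omega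
      exact le_rfl
    · intro i _ h; omega
  | cons C Cs ih =>
    have hC := hL C (by simp)
    have hp := hC.pos
    have ih' := fun j => ih (fun D hD => hL D (by simp [hD])) j
    simp only [List.flatten_cons, List.length_append, List.append_assoc] at hj ⊢
    set R := Cs.flatten ++ A with hR
    have big : ∀ i, C.length ≤ i → PS (C ++ R) i = C.sum + PS R (i - C.length) :=
      fun i hi => PS_append_ge _ _ hi
    have sm : ∀ i, i < C.length → PS (C ++ R) i ≤ 0 := fun i hi => by
      rw [PS_append_le _ _ hi.le]; exact hC.le hi
    have hCC : PS (C ++ R) C.length = C.sum := by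
      rw [big _ le_rfl]; simp [PS_zero]
    have h00 := hC.2.1
    simp only [H]
    split_ifs with h1 h2
    · subst h1
      refine ⟨0, le_rfl, by omega, PS_zero _, ?_, fun i _ h => by omega⟩
      intro i hi
      obtain rfl : i = 0 := by omega
      exact le_rfl
    · refine ⟨C.length, h2, by omega, hCC, ?_, ?_⟩
      · intro i hi
        rcases hi.lt_or_eq with h | h
        · rw [hCC]; linarith [sm i h]
        · rw [h]
      · intro i hi hi2
        refine ⟨0, by omega, ?_⟩
        rw [PS_zero, PS_append_le _ _ hi2.le]
        exact hC.2.2 i (by omega) hi2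
    · obtain ⟨l, hl1, hl2, hl3, hl4, hl5⟩ := ih' (j - C.length) (by omega)
      have hbl : PS (C ++ R) (l + C.length) = C.sum + PS R l := by
        rw [big _ (by omega)]; simp
      refine ⟨l + C.length, by omega, by omega, by rw [hbl, hl3], ?_, ?_⟩
      · intro i hi
        rw [hbl]
        by_cases h : i < C.length
        · have := hl4 0 (by omega)
          rw [PS_zero] at this
          linarith [sm i h]
        · rw [big _ (by omega)]
          linarith [hl4 (i - C.length) (by omega)]
      · intro i hi hi2
        obtain ⟨k, hk, hk'⟩ := hl5 (i - C.length) (by omega) (by omega)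
        refine ⟨k + C.length, by omega, ?_⟩
        rw [big _ (by omega), big _ (by omega)]
        simpa using hk'

lemma runMax_eq (w : ℕ → ℝ) (l : ℕ) (h : ∀ i ≤ l, w i ≤ w l) : runMax w l = w l := by
  have : IsGreatest (w '' Set.Icc 0 l) (w l) := by
    refine ⟨⟨l, ⟨by omega, le_rfl⟩, rfl⟩, ?_⟩
    rintro _ ⟨i, hi, rfl⟩
    exact h i hi.2
  exact this.csSup_eq

lemma le_runMax (w : ℕ → ℝ) {k l : ℕ} (h : k ≤ l) : w k ≤ runMax w l :=
  le_csSup ((Set.finite_Icc 0 l).image w).bddAbove ⟨k, ⟨by omega, h⟩, rfl⟩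

lemma runMax_d (w : ℕ → ℝ) (j l : ℕ) (hjl : j ≤ l) (h : ∀ i ≤ l, w i ≤ w l)
    (h2 : ∀ i, j ≤ i → i < l → ∃ k ≤ i, w i < w k) : runMax w (dIdx w j) = w l := by
  have hd : dIdx w j = l := by
    have hm : l ∈ {l : ℕ | j ≤ l ∧ w l = runMax w l} := ⟨hjl, (runMax_eq w l h).symm⟩
    have h3 := Nat.sInf_mem ⟨l, hm⟩
    have h4 := Nat.sInf_le hm
    by_contra hne
    obtain ⟨k, hk, hk'⟩ := h2 _ h3.1 (lt_of_le_of_ne h4 hne)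
    have := le_runMax w hk
    rw [← h3.2] at this
    linarith
  rw [hd, runMax_eq w l h]

lemma max_at (Ds : List (List ℝ)) (A : List ℝ) (hL : ∀ C ∈ Ds, Lad C) (hA : Neg A)
    (i : ℕ) (hi : i ≤ (Ds.flatten ++ A).length) :
    PS (Ds.flatten ++ A) i ≤ PS (Ds.flatten ++ A) Ds.flatten.length := by
  obtain ⟨l, h1, h2, -, h4, -⟩ := dchar Ds A hL _ le_rfl
  obtain rfl : l = _ := le_antisymm h2 h1
  by_cases h : i ≤ Ds.flatten.length
  · exact h4 i h
  · rw [PS_append_ge _ _ (by omega), PS_append_ge _ _ le_rfl]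
    rw [List.length_append] at hi
    have := hA (i - Ds.flatten.length) (by omega) (by omega)
    simp only [Nat.sub_self, PS_zero]
    linarith

lemma len_map_rev (Ds : List (List ℝ)) :
    (Ds.map List.reverse).flatten.length = Ds.flatten.length := by
  induction Ds with
  | nil => rfl
  | cons C Cs ih => simp only [List.map_cons, List.flatten_cons, List.length_append, ih,
      List.length_reverse]

lemma min_at (Ds : List (List ℝ)) (A : List ℝ) (hL : ∀ C ∈ Ds, Lad C) (hA : Neg A)
    (i : ℕ) (hi : i ≤ A.length + Ds.flatten.length) :
    PS (A.reverse ++ (Ds.map List.reverse).flatten) A.length ≤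
      PS (A.reverse ++ (Ds.map List.reverse).flatten) i := by
  rw [PS_append_ge _ _ (by simp)]
  by_cases h : A.length ≤ i
  · rw [PS_append_ge _ _ (by simpa using h)]
    have := (fut Ds hL 0 (by omega)).2 ⟨i - A.length, ⟨by omega, by omega⟩, rfl⟩
    rw [H_zero] at this
    simpa [PS_zero] using this
  · rw [PS_append_le _ _ (by simp; omega), PS_reverse _ (by omega)]
    have := hA (A.length - i) (by omega) (by omega)
    simp only [List.length_reverse, Nat.sub_self, PS_zero, List.sum_reverse]
    linarith

lemma maxVec (n : ℕ) (Ds : List (List ℝ)) (A : List ℝ) (hL : ∀ C ∈ Ds, Lad C)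
    (hm : maxIdx n (PS (Ds.flatten ++ A)) = Ds.flatten.length) :
    maxAtDVec n (PS (Ds.flatten ++ A)) = H Ds := by
  funext j
  unfold maxAtDVec
  rw [hm]
  obtain ⟨l, h1, h2, h3, h4, h5⟩ := dchar Ds A hL (min j Ds.flatten.length) (by omega)
  rw [runMax_d _ _ l h1 h4 h5, h3]
  rcases le_total j Ds.flatten.length with h | h
  · rw [min_eq_left h]
  · rw [min_eq_right h, H_cap Ds j hL h]

lemma minVec (n : ℕ) (Ds : List (List ℝ)) (A : List ℝ) (hL : ∀ C ∈ Ds, Lad C)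
    (hn : n = A.length + Ds.flatten.length)
    (hm : minIdx n (PS (A.reverse ++ (Ds.map List.reverse).flatten)) = A.length) :
    postMinVec n (PS (A.reverse ++ (Ds.map List.reverse).flatten)) = H Ds := by
  have key : ∀ j ≤ Ds.flatten.length,
      futMin n (PS (A.reverse ++ (Ds.map List.reverse).flatten)) (A.length + j)
        = A.sum + H Ds j := by
    intro j hj
    obtain ⟨⟨k, ⟨hk1, hk2⟩, hk⟩, hl⟩ := fut Ds hL j hj
    have big : ∀ i, A.length ≤ i → PS (A.reverse ++ (Ds.map List.reverse).flatten) i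
        = A.sum + PS (Ds.map List.reverse).flatten (i - A.length) := by
      intro i hi
      rw [PS_append_ge _ _ (by simpa using hi)]; simp
    refine IsLeast.csInf_eq ⟨⟨A.length + k, ⟨by omega, by omega⟩, ?_⟩, ?_⟩
    · rw [big _ (by omega), ← hk]; simp
    · rintro _ ⟨i, ⟨h1, h2⟩, rfl⟩
      rw [big _ (by omega)]
      have := hl ⟨i - A.length, ⟨by omega, by omega⟩, rfl⟩
      linarith
  funext j
  unfold postMinVec
  rw [hm]
  have e : n - A.length = Ds.flatten.length := by omega
  rw [e, key _ (by omega)]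
  have := key 0 (by omega)
  rw [add_zero] at this
  rw [this, H_zero]
  rcases le_total j Ds.flatten.length with h | h
  · rw [min_eq_left h]; ring
  · rw [min_eq_right h, H_cap Ds j hL h]; ring

lemma uniq (Ds Es : List (List ℝ)) (A B : List ℝ) (hD : ∀ C ∈ Ds, Lad C) (hE : ∀ C ∈ Es, Lad C)
    (hA : Neg A) (hB : Neg B) (h : Ds.flatten ++ A = Es.flatten ++ B) : Ds = Es ∧ A = B := by
  have aux : ∀ (E R A : List ℝ), Lad E → Neg A → A ≠ E ++ R := by
    rintro E R A hE hA rfl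
    have := hA E.length hE.pos (by simp)
    rw [PS_append_ge _ _ le_rfl] at this
    simp only [Nat.sub_self, PS_zero] at this
    linarith [hE.2.1]
  have aux2 : ∀ (D E R S : List ℝ), Lad D → Lad E → D ++ R = E ++ S → ¬ D.length < E.length := by
    intro D E R S hD hE h hl
    have h1 := PS_append_ge D R (le_refl D.length)
    rw [h, PS_append_le _ _ hl.le] at h1
    simp only [Nat.sub_self, PS_zero] at h1
    linarith [hD.2.1, hE.2.2 _ hD.pos hl]
  induction Ds generalizing Es with
  | nil =>
    cases Es with
    | nil => simpa using h
    | cons E Es =>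
      exact absurd (by simpa using h) (aux E (Es.flatten ++ B) A (hE E (by simp)) hA)
  | cons D Ds ih =>
    cases Es with
    | nil =>
      exact absurd (by simpa using h.symm) (aux D (Ds.flatten ++ A) B (hD D (by simp)) hB)
    | cons E Es =>
      simp only [List.flatten_cons, List.append_assoc] at h
      have a := aux2 _ _ _ _ (hD D (by simp)) (hE E (by simp)) h
      have b := aux2 _ _ _ _ (hE E (by simp)) (hD D (by simp)) h.symm
      obtain ⟨h1, h2⟩ := List.append_inj h (by omega)
      obtain ⟨h3, h4⟩ := ih Es (fun C hC => hD C (by simp [hC])) (fun C hC => hE C (by simp [hC])) h2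
      exact ⟨by rw [h1, h3], h4⟩

lemma decomp (N : ℕ) : ∀ r : List ℝ, r.length ≤ N →
    (∀ i j, i < j → j ≤ r.length → PS r i ≠ PS r j) →
    ∃ (Ds : List (List ℝ)) (A : List ℝ), (∀ C ∈ Ds, Lad C) ∧ Neg A ∧ r = Ds.flatten ++ A := by
  induction N with
  | zero =>
    intro r hr _
    exact ⟨[], r, by simp, fun k h1 h2 => by omega, by simp⟩
  | succ N ih =>
    intro r hr hd
    by_cases hneg : Neg r
    · exact ⟨[], r, by simp, hneg, by simp⟩
    have hex : ∃ k, 0 < k ∧ k ≤ r.length ∧ 0 ≤ PS r k := by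
      unfold Neg at hneg
      push Not at hneg
      exact hneg
    classical
    obtain ⟨h1, h2, h3⟩ := Nat.find_spec hex
    have hmin := fun m => @Nat.find_min _ _ hex m
    set k := Nat.find hex
    have h4 : 0 < PS r k := by
      refine lt_of_le_of_ne h3 ?_
      have := hd 0 k h1 h2
      rwa [PS_zero] at this
    have hlen : (r.take k).length = k := by simp [h2]
    have hsum : (r.take k).sum = PS r k := rfl
    have hr' : r.take k ++ r.drop k = r := List.take_append_drop k r
    obtain ⟨Ds, A, hL, hA, he⟩ := ih (r.drop k) (by simp; omega) (by
      intro i j hij hj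
      rw [List.length_drop] at hj
      have a := hd (i + k) (j + k) (by omega) (by omega)
      rw [← hr', PS_append_ge _ _ (by omega), PS_append_ge _ _ (by omega), hlen] at a
      simpa using a)
    refine ⟨r.take k :: Ds, A, ?_, hA, ?_⟩
    · intro C hC
      rcases List.mem_cons.1 hC with rfl | hC
      · refine ⟨?_, h4, ?_⟩
        · intro h; rw [h] at hlen; simp at hlen; omega
        · intro m hm hm2
          rw [hlen] at hm2
          have := hmin m hm2
          have e : PS (r.take k) m = PS r m := by
            simp [PS, List.take_take, min_eq_left hm2.le]
          rw [e]
          by_contra hc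
          exact this ⟨hm, by omega, by linarith⟩
      · exact hL C hC
    · rw [List.flatten_cons, List.append_assoc, ← he, hr']

lemma perm_rev (Ds : List (List ℝ)) (A : List ℝ) :
    (A.reverse ++ (Ds.map List.reverse).flatten).Perm (Ds.flatten ++ A) := by
  refine List.perm_append_comm.trans (List.Perm.append ?_ (List.reverse_perm A))
  induction Ds with
  | nil => simp
  | cons C Cs ih =>
    simp only [List.map_cons, List.flatten_cons]
    exact (List.reverse_perm C).append ih

lemma rev_eq (Ds : List (List ℝ)) (A : List ℝ) :
    (A.reverse ++ (Ds.map List.reverse).flatten).reverse = Ds.reverse.flatten ++ A := by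
  simp [List.reverse_append, List.reverse_flatten]

lemma path_eq (n : ℕ) (x : Fin n → ℝ) (σ : Equiv.Perm (Fin n)) :
    pathOf n x σ = PS (List.ofFn (x ∘ σ)) := by
  funext j
  simp [pathOf, PS, List.sum_take_ofFn]

lemma surj (n : ℕ) (x : Fin n → ℝ) (hx : Function.Injective x) (r : List ℝ)
    (hr : r.Perm (List.ofFn x)) : ∃ σ : Equiv.Perm (Fin n), List.ofFn (x ∘ σ) = r := by
  have hlen : r.length = n := by simpa using hr.length_eq
  have hnd : r.Nodup := hr.nodup_iff.2 (List.nodup_ofFn.2 hx)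
  have hmem : ∀ i : Fin n, ∃ k, x k = r.get (i.cast hlen.symm) := by
    intro i
    have := hr.mem_iff.1 (List.get_mem r (i.cast hlen.symm))
    simpa [List.mem_ofFn] using this
  choose g hg using hmem
  have hinj : Function.Injective g := by
    intro a b hab
    have h1 := hg a
    rw [hab, hg b] at h1
    have := List.nodup_iff_injective_get.1 hnd h1
    exact (Fin.cast_injective _ this).symm
  refine ⟨Equiv.ofBijective g (Finite.injective_iff_bijective.1 hinj), ?_⟩
  apply List.ext_get
  · simp [hlen]
  · intro i h1 h2
    have h3 : i < n := by omega
    have := hg ⟨i, h3⟩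
    simpa using this

lemma path_inj (n : ℕ) (x : Fin n → ℝ)
    (hx : ∀ I J : Finset (Fin n), I ≠ J → ∑ i ∈ I, x i ≠ ∑ i ∈ J, x i)
    (σ : Equiv.Perm (Fin n)) (i j : ℕ) (hij : i < j) (hj : j ≤ n) :
    pathOf n x σ i ≠ pathOf n x σ j := by
  have e : ∀ k, pathOf n x σ k =
      ∑ a ∈ (Finset.univ.filter (fun i : Fin n => (i : ℕ) < k)).map σ.toEmbedding, x a := by
    intro k
    rw [Finset.sum_map]; rfl
  rw [e, e]
  apply hx
  intro h
  have h2 := Finset.map_injective _ h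
  have : (⟨i, by omega⟩ : Fin n) ∈ Finset.univ.filter (fun a : Fin n => (a : ℕ) < i) := by
    rw [h2]; simp [hij]
  simp at this

lemma path_inj' (n : ℕ) (x : Fin n → ℝ)
    (hx : ∀ I J : Finset (Fin n), I ≠ J → ∑ i ∈ I, x i ≠ ∑ i ∈ J, x i)
    (σ : Equiv.Perm (Fin n)) (i j : ℕ) (hi : i ≤ n) (hj : j ≤ n)
    (h : pathOf n x σ i = pathOf n x σ j) : i = j := by
  rcases lt_trichotomy i j with h1 | h1 | h1
  · exact absurd h (path_inj n x hx σ i j h1 hj)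
  · exact h1
  · exact absurd h.symm (path_inj n x hx σ j i h1 hi)

lemma maxIdx_eq (n : ℕ) (w : ℕ → ℝ) (hw : ∀ i j, i ≤ n → j ≤ n → w i = w j → i = j) (k : ℕ)
    (hk : k ≤ n) (h : ∀ i ≤ n, w i ≤ w k) : maxIdx n w = k := by
  have hm := Nat.sInf_mem (s := {j : ℕ | j ≤ n ∧ ∀ i ≤ n, w i ≤ w j}) ⟨k, hk, h⟩
  exact hw _ _ hm.1 hk (le_antisymm (h _ hm.1) (hm.2 _ hk))

lemma minIdx_eq (n : ℕ) (w : ℕ → ℝ) (hw : ∀ i j, i ≤ n → j ≤ n → w i = w j → i = j) (k : ℕ)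
    (hk : k ≤ n) (h : ∀ i ≤ n, w k ≤ w i) : minIdx n w = k := by
  have hm := Nat.sInf_mem (s := {j : ℕ | j ≤ n ∧ ∀ i ≤ n, w j ≤ w i}) ⟨k, hk, h⟩
  exact hw _ _ hm.1 hk (le_antisymm (hm.2 _ hk) (h _ hm.1))

lemma exMap (n : ℕ) (x : Fin n → ℝ)
    (hx : ∀ I J : Finset (Fin n), I ≠ J → ∑ i ∈ I, x i ≠ ∑ i ∈ J, x i) :
    ∃ Φ : Equiv.Perm (Equiv.Perm (Fin n)), ∀ σ,
      n - minIdx n (pathOf n x (Φ σ)) = maxIdx n (pathOf n x σ) ∧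
      postMinVec n (pathOf n x (Φ σ)) = maxAtDVec n (pathOf n x σ) := by
  have hxi : Function.Injective x := by
    intro a b hab
    by_contra hne
    exact hx {a} {b} (by simpa using hne) (by simpa using hab)
  have ex : ∀ σ : Equiv.Perm (Fin n), ∃ (τ : Equiv.Perm (Fin n)) (Ds : List (List ℝ)) (A : List ℝ),
      (∀ C ∈ Ds, Lad C) ∧ Neg A ∧ List.ofFn (x ∘ σ) = Ds.flatten ++ A ∧
      List.ofFn (x ∘ τ) = A.reverse ++ (Ds.map List.reverse).flatten := by
    intro σ
    obtain ⟨Ds, A, hL, hA, he⟩ := decomp n (List.ofFn (x ∘ σ)) (by simp) (by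
      intro i j hij hj
      rw [← path_eq]
      exact path_inj n x hx σ i j hij (by simpa using hj))
    obtain ⟨τ, hτ⟩ := surj n x hxi (A.reverse ++ (Ds.map List.reverse).flatten) (by
      refine (perm_rev Ds A).trans ?_
      rw [← he]
      exact Equiv.Perm.ofFn_comp_perm σ x)
    exact ⟨τ, Ds, A, hL, hA, he, hτ⟩
  choose Φ Ds A hL hA h1 h2 using ex
  have hinj : Function.Injective Φ := by
    intro a b hab
    have e := h2 a
    rw [hab, h2 b] at e
    have e' := congrArg List.reverse e
    rw [rev_eq, rev_eq] at e'
    obtain ⟨e1, e2⟩ := uniq _ _ _ _ (fun C hC => hL b C (by simpa using hC))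
      (fun C hC => hL a C (by simpa using hC)) (hA b) (hA a) e'
    have e3 := List.reverse_injective e1
    have e4 : List.ofFn (x ∘ a) = List.ofFn (x ∘ b) := by rw [h1 a, h1 b, e3, e2]
    have e5 := List.ofFn_injective e4
    ext i
    have := hxi (congrFun e5 i)
    rw [this]
  refine ⟨Equiv.ofBijective Φ (Finite.injective_iff_bijective.1 hinj), fun σ => ?_⟩
  rw [Equiv.ofBijective_apply]
  have hlen : n = (A σ).length + (Ds σ).flatten.length := by
    have := congrArg List.length (h1 σ)
    rw [List.length_ofFn, List.length_append] at this
    omega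
  have hM : maxIdx n (pathOf n x σ) = (Ds σ).flatten.length := by
    apply maxIdx_eq n _ (path_inj' n x hx σ) _ (by omega)
    intro i hi
    rw [path_eq, h1]
    exact max_at _ _ (hL σ) (hA σ) i (by rw [List.length_append]; omega)
  have hm : minIdx n (pathOf n x (Φ σ)) = (A σ).length := by
    apply minIdx_eq n _ (path_inj' n x hx (Φ σ)) _ (by omega)
    intro i hi
    rw [path_eq, h2]
    exact min_at _ _ (hL σ) (hA σ) i (by omega)
  refine ⟨by omega, ?_⟩
  rw [path_eq, h2] at hm ⊢
  rw [path_eq, h1] at hM ⊢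
  rw [minVec n _ _ (hL σ) hlen hm, maxVec n _ _ (hL σ) hM]

lemma prob {Ω : Type*} [MeasurableSpace Ω] (P : Measure Ω) [IsProbabilityMeasure P]
    (n : ℕ) (π : Ω → Equiv.Perm (Fin n))
    (hπ : ∀ σ : Equiv.Perm (Fin n), P {ω | π ω = σ} = ((Nat.factorial n : ℝ≥0∞))⁻¹)
    (S : Finset (Equiv.Perm (Fin n))) :
    P {ω | π ω ∈ S} = S.card * ((Nat.factorial n : ℝ≥0∞))⁻¹ := by
  have ub : ∀ S : Finset (Equiv.Perm (Fin n)),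
      P {ω | π ω ∈ S} ≤ S.card * ((Nat.factorial n : ℝ≥0∞))⁻¹ := by
    intro S
    have e : {ω | π ω ∈ S} = ⋃ σ ∈ S, {ω | π ω = σ} := by ext; simp
    rw [e]
    refine (measure_biUnion_finset_le S _).trans ?_
    simp [hπ]
  refine le_antisymm (ub S) ?_
  have h1 : (1 : ℝ≥0∞) ≤ P {ω | π ω ∈ S} + P {ω | π ω ∈ Sᶜ} := by
    rw [← measure_univ (μ := P)]
    refine (measure_mono ?_).trans (measure_union_le _ _)
    intro ω _
    by_cases h : π ω ∈ S
    · exact Or.inl h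
    · exact Or.inr (by simpa using h)
  have h2 : (S.card : ℝ≥0∞) * ((Nat.factorial n : ℝ≥0∞))⁻¹
      + (Sᶜ.card : ℝ≥0∞) * ((Nat.factorial n : ℝ≥0∞))⁻¹ = 1 := by
    rw [← add_mul, ← Nat.cast_add, Finset.card_add_card_compl, Fintype.card_perm, Fintype.card_fin]
    exact ENNReal.mul_inv_cancel (by simp [Nat.factorial_ne_zero]) (by simp)
  rw [← h2] at h1
  have h3 := h1.trans (add_le_add_right (ub Sᶜ) _)
  refine (ENNReal.add_le_add_iff_right ?_).1 h3
  exact ENNReal.mul_ne_top (by simp) (by simp [Nat.factorial_ne_zero])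

end Aux11

/-- if `x` has the different-subset-sum property and `π` is a uniform
random permutation, then the step process `X_t = Σ_{i ≤ ⌊nt⌋} x_{π(i)}` attains its
minimum and maximum over `[0,1]` at unique (grid) times `ρ = nρ/n` and `η = nη/n`, and
the random vectors `(X̲̲_{ρ+j/n} − X̲̲_ρ)_{0 ≤ j ≤ n−nρ}` and `(X̄_{d(j/n)})_{0 ≤ j ≤ nη}`
(recorded together with their lengths) have the same distribution. -/
theorem stmt11
    {Ω : Type*} [MeasurableSpace Ω] (P : Measure Ω) [IsProbabilityMeasure P]
    (n : ℕ) (hn : 0 < n) (x : Fin n → ℝ)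
    -- different subset sums
    (hx : ∀ I J : Finset (Fin n), I ≠ J → ∑ i ∈ I, x i ≠ ∑ i ∈ J, x i)
    -- π is a uniform random permutation of [n]
    (π : Ω → Equiv.Perm (Fin n))
    (hπ : ∀ σ : Equiv.Perm (Fin n), P {ω | π ω = σ} = ((Nat.factorial n : ℝ≥0∞))⁻¹) :
    (∀ ω : Ω,
      (∃! j : ℕ, j ≤ n ∧ ∀ i ≤ n, pathOf n x (π ω) j ≤ pathOf n x (π ω) i) ∧
      (∃! j : ℕ, j ≤ n ∧ ∀ i ≤ n, pathOf n x (π ω) i ≤ pathOf n x (π ω) j)) ∧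
    (∀ (m : ℕ) (v : ℕ → ℝ),
      P {ω | n - minIdx n (pathOf n x (π ω)) = m ∧
              postMinVec n (pathOf n x (π ω)) = v} =
      P {ω | maxIdx n (pathOf n x (π ω)) = m ∧
              maxAtDVec n (pathOf n x (π ω)) = v}) := by
  refine ⟨fun ω => ⟨?_, ?_⟩, fun m v => ?_⟩
  · obtain ⟨k, hk, h⟩ := Finset.exists_min_image (Finset.range (n + 1)) (pathOf n x (π ω)) ⟨0, by simp⟩
    simp only [Finset.mem_range, Nat.lt_succ_iff] at hk h
    refine ⟨k, ⟨hk, h⟩, ?_⟩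
    rintro j ⟨hj, h'⟩
    exact Aux11.path_inj' n x hx (π ω) _ _ hj hk (le_antisymm (h' _ hk) (h _ hj))
  · obtain ⟨k, hk, h⟩ := Finset.exists_max_image (Finset.range (n + 1)) (pathOf n x (π ω)) ⟨0, by simp⟩
    simp only [Finset.mem_range, Nat.lt_succ_iff] at hk h
    refine ⟨k, ⟨hk, h⟩, ?_⟩
    rintro j ⟨hj, h'⟩
    exact Aux11.path_inj' n x hx (π ω) _ _ hj hk (le_antisymm (h _ hj) (h' _ hk))
  · classical
    obtain ⟨Φ, hΦ⟩ := Aux11.exMap n x hx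
    have a := Aux11.prob P n π hπ (Finset.univ.filter fun σ =>
      n - minIdx n (pathOf n x σ) = m ∧ postMinVec n (pathOf n x σ) = v)
    have b := Aux11.prob P n π hπ (Finset.univ.filter fun σ =>
      maxIdx n (pathOf n x σ) = m ∧ maxAtDVec n (pathOf n x σ) = v)
    simp only [Finset.mem_filter, Finset.mem_univ, true_and] at a b
    rw [a, b]
    congr 2
    symm
    apply Finset.card_equiv Φ
    intro σ
    simp only [Finset.mem_filter, Finset.mem_univ, true_and, (hΦ σ).1, (hΦ σ).2]
end
end

section
/- Let ν be a nonnegative Borel measure on (0,1] with ∫ x² ν(dx) < ∞, let ν̄(x) = ν((x,1]), and define Ψ(λ) = ∫_{(0,1]} (e^{−λx} − 1 + λx) ν(dx). Suppose there exists α ∈ (1,2) such that lim_{x→0+} x^α ν̄(x) = +∞. Then for every γ ∈ (1,α), lim_{λ→∞} λ^{−γ} Ψ(λ) = +∞. -/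
open MeasureTheory Set Filter Topology
open scoped ENNReal

noncomputable section

/-- if `ν` is a measure on `(0,1]` with finite second moment whose tail
`ν̄(x) = ν((x,1])` satisfies `x^α ν̄(x) → ∞` as `x → 0+` for some `α ∈ (1,2)`, then the
compensated Laplace exponent `Ψ(λ) = ∫ (e^{−λx} − 1 + λx) ν(dx)` satisfies
`λ^{−γ} Ψ(λ) → ∞` for every `γ ∈ (1,α)`. -/
theorem stmt12
    (ν : Measure ℝ)
    (hsupp : ν (Set.Ioc (0:ℝ) 1)ᶜ = 0)
    (hmom : ∫⁻ x in Set.Ioc (0:ℝ) 1, ENNReal.ofReal (x ^ 2) ∂ν < ⊤)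
    (α : ℝ) (hα1 : 1 < α) (hα2 : α < 2)
    (htail : Tendsto (fun x : ℝ => x ^ α * (ν (Set.Ioc x 1)).toReal)
      (𝓝[>] (0:ℝ)) atTop) :
    ∀ γ : ℝ, 1 < γ → γ < α →
      Tendsto (fun lam : ℝ =>
          (∫ x in Set.Ioc (0:ℝ) 1, (Real.exp (-(lam * x)) - 1 + lam * x) ∂ν) / lam ^ γ)
        atTop atTop := by
  intro γ hγ1 hγα
  have hinv : Tendsto (fun l : ℝ => l⁻¹) atTop (𝓝[>] (0:ℝ)) := tendsto_inv_atTop_nhdsGT_zero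
  have h1 := (htail.comp hinv).const_mul_atTop (Real.exp_pos (-1))
  refine tendsto_atTop_mono' _ ?_ h1
  filter_upwards [eventually_ge_atTop (1:ℝ)] with l hl
  have hl0 : 0 < l := by linarith
  have hnn : ∀ x : ℝ, 0 ≤ Real.exp (-(l * x)) - 1 + l * x := fun x => by
    have := Real.add_one_le_exp (-(l * x)); linarith
  have hup : ∀ u : ℝ, 0 ≤ u → Real.exp (-u) - 1 + u ≤ u ^ 2 := fun u hu => by
    have h2 : Real.exp (-u) * (1 + u) ≤ 1 := by
      have h3 := Real.add_one_le_exp u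
      have h4 : Real.exp (-u) * Real.exp u = 1 := by rw [← Real.exp_add]; simp
      have h5 := Real.exp_pos (-u)
      nlinarith
    have h5 := Real.exp_pos (-u)
    by_contra! hc
    nlinarith [mul_pos (sub_pos.2 hc) (show (0:ℝ) < 1 + u by linarith), pow_nonneg hu 3]
  have hsq : Integrable (fun x : ℝ => x ^ 2) (ν.restrict (Ioc 0 1)) := by
    refine ⟨by fun_prop, ?_⟩
    rw [hasFiniteIntegral_iff_ofReal (ae_of_all _ fun x => sq_nonneg x)]
    exact hmom
  have hint : Integrable (fun x : ℝ => Real.exp (-(l * x)) - 1 + l * x)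
      (ν.restrict (Ioc 0 1)) := by
    refine (hsq.const_mul (l ^ 2)).mono' (by fun_prop) ?_
    filter_upwards [ae_restrict_mem measurableSet_Ioc] with x hx
    rw [Real.norm_of_nonneg (hnn x), ← mul_pow]
    exact hup _ (mul_nonneg hl0.le hx.1.le)
  have hm := mul_meas_ge_le_integral_of_nonneg (ae_of_all _ hnn) hint (Real.exp (-1))
  have hfin := hint.measure_ge_lt_top (Real.exp_pos (-1))
  have hsub : ν (Ioc l⁻¹ 1) ≤ (ν.restrict (Ioc 0 1))
      {x | Real.exp (-1) ≤ Real.exp (-(l * x)) - 1 + l * x} := by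
    have hlp : 0 < l⁻¹ := inv_pos.2 hl0
    rw [← Measure.restrict_eq_self ν (t := Ioc 0 1) (s := Ioc l⁻¹ 1)
      (Ioc_subset_Ioc_left hlp.le)]
    refine measure_mono fun x hx => ?_
    have hu : 1 ≤ l * x := by
      have := mul_le_mul_of_nonneg_left hx.1.le hl0.le
      rwa [mul_inv_cancel₀ hl0.ne'] at this
    have h2 := Real.add_one_le_exp (1 - l * x)
    have h3 : Real.exp (-(l * x)) = Real.exp (-1) * Real.exp (1 - l * x) := by
      rw [← Real.exp_add]; congr 1; ring
    have h4 : Real.exp (-1) ≤ 1 := Real.exp_le_one_iff.2 (by norm_num)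
    have h5 := Real.exp_pos (-1)
    simp only [mem_setOf_eq]
    rw [h3]
    nlinarith
  have hreal := ENNReal.toReal_mono hfin.ne hsub
  have hΨ := (mul_le_mul_of_nonneg_left hreal (Real.exp_pos (-1)).le).trans hm
  have hpow : l ^ γ ≤ l ^ α := Real.rpow_le_rpow_of_exponent_le hl hγα.le
  have hgp : 0 < l ^ γ := Real.rpow_pos_of_pos hl0 _
  simp only [Function.comp]
  rw [Real.inv_rpow hl0.le]
  calc Real.exp (-1) * ((l ^ α)⁻¹ * (ν (Ioc l⁻¹ 1)).toReal)
      = (Real.exp (-1) * (ν (Ioc l⁻¹ 1)).toReal) * (l ^ α)⁻¹ := by ring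
    _ ≤ (Real.exp (-1) * (ν (Ioc l⁻¹ 1)).toReal) * (l ^ γ)⁻¹ := by gcongr
    _ ≤ _ := by rw [div_eq_mul_inv]; gcongr
end
end

section
/- Let f_n, f : [0,∞) → [0,∞) be càdlàg functions such that f has only nonnegative jumps, and suppose there exist increasing homeomorphisms α_n : [0,1] → [0,1] with sup_{s∈[0,1]} |f_n(α_n(s)) − f(s)| → 0 and sup_{s∈[0,1]} |α_n(s) − s| → 0. Let T > 0 and let c_n, c : [0,T] → [0,1] with c continuous and c_n → c uniformly on [0,T]. Then for every t ∈ [0,T], f(c(t)−) ≤ liminf_n f_n(c_n(t)) ≤ limsup_n f_n(c_n(t)) ≤ f(c(t)), where f(x−) denotes the left limit of f at x > 0 and f(0−) := f(0). -/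
open Set Filter Topology

/-- if `f n → f` in the Skorohod sense on `[0,1]` (via time changes
`α n`), `f` has only nonnegative jumps, and `c n → c` uniformly on `[0,T]` with `c`
continuous, then for every `t ∈ [0,T]`,
`f(c(t)−) ≤ liminf f n (c n t) ≤ limsup f n (c n t) ≤ f(c(t))`. -/
theorem stmt17
    (f : ℝ → ℝ) (fn : ℕ → ℝ → ℝ)
    -- f, fn : [0,∞) → [0,∞) càdlàg
    (hf_nonneg : ∀ x ≥ (0:ℝ), 0 ≤ f x)
    (hfn_nonneg : ∀ n, ∀ x ≥ (0:ℝ), 0 ≤ fn n x)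
    (hf_rc : ∀ x ≥ (0:ℝ), ContinuousWithinAt f (Set.Ici x) x)
    (hfn_rc : ∀ n, ∀ x ≥ (0:ℝ), ContinuousWithinAt (fn n) (Set.Ici x) x)
    (hfn_ll : ∀ n, ∀ x > (0:ℝ), ∃ L, Tendsto (fn n) (𝓝[<] x) (𝓝 L))
    -- fm is the left-limit function of f, with the convention f(0−) := f(0),
    -- and f has only nonnegative jumps
    (fm : ℝ → ℝ)
    (hfm : ∀ x > (0:ℝ), Tendsto f (𝓝[<] x) (𝓝 (fm x)))
    (hfm0 : fm 0 = f 0)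
    (hjump : ∀ x > (0:ℝ), fm x ≤ f x)
    -- Skorohod convergence of fn to f on [0,1] via homeomorphisms α n
    (α : ℕ → ℝ → ℝ)
    (hα : ∀ n, ContinuousOn (α n) (Set.Icc 0 1) ∧ StrictMonoOn (α n) (Set.Icc 0 1) ∧
      α n 0 = 0 ∧ α n 1 = 1 ∧ Set.MapsTo (α n) (Set.Icc 0 1) (Set.Icc 0 1))
    (hconv : ∀ ε > (0:ℝ), ∃ N : ℕ, ∀ n ≥ N, ∀ s ∈ Set.Icc (0:ℝ) 1,
      |fn n (α n s) - f s| < ε ∧ |α n s - s| < ε)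
    -- the time changes
    (T : ℝ) (hT : 0 < T)
    (c : ℝ → ℝ) (cn : ℕ → ℝ → ℝ)
    (hc_cont : ContinuousOn c (Set.Icc 0 T))
    (hc_range : ∀ t ∈ Set.Icc (0:ℝ) T, c t ∈ Set.Icc (0:ℝ) 1)
    (hcn_range : ∀ n, ∀ t ∈ Set.Icc (0:ℝ) T, cn n t ∈ Set.Icc (0:ℝ) 1)
    (hcn_conv : TendstoUniformlyOn (fun n => cn n) c atTop (Set.Icc 0 T)) :
    ∀ t ∈ Set.Icc (0:ℝ) T,
      fm (c t) ≤ Filter.liminf (fun n => fn n (cn n t)) atTop ∧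
      Filter.liminf (fun n => fn n (cn n t)) atTop ≤
        Filter.limsup (fun n => fn n (cn n t)) atTop ∧
      Filter.limsup (fun n => fn n (cn n t)) atTop ≤ f (c t) := by
  intro t ht
  have hx := hc_range t ht
  have hle : fm (c t) ≤ f (c t) := by
    rcases hx.1.eq_or_lt with h | h
    · rw [← h, hfm0]
    · exact hjump _ h
  have loc : ∀ ε > (0:ℝ), ∃ δ > (0:ℝ), ∀ s ∈ Set.Icc (0:ℝ) 1, |s - c t| < δ →
      fm (c t) - ε < f s ∧ f s < f (c t) + ε := by
    intro ε hε
    obtain ⟨δ₁, hδ₁, h1⟩ := Metric.continuousWithinAt_iff.1 (hf_rc (c t) hx.1) ε hε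
    have hleft : ∃ δ₂ > (0:ℝ), ∀ s ∈ Set.Icc (0:ℝ) 1, s < c t → |s - c t| < δ₂ →
        |f s - fm (c t)| < ε := by
      rcases hx.1.eq_or_lt with h | h
      · exact ⟨1, one_pos, fun s hs hlt => by linarith [hs.1]⟩
      · obtain ⟨δ₂, hδ₂, h2⟩ := Metric.tendsto_nhdsWithin_nhds.1 (hfm _ h) ε hε
        exact ⟨δ₂, hδ₂, fun s _ hlt hd => h2 hlt hd⟩
    obtain ⟨δ₂, hδ₂, h2⟩ := hleft
    refine ⟨min δ₁ δ₂, lt_min hδ₁ hδ₂, fun s hs hd => ?_⟩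
    rcases lt_or_ge s (c t) with h | h
    · have := abs_lt.1 (h2 s hs h (hd.trans_le (min_le_right _ _)))
      constructor <;> linarith [this.1, this.2]
    · have h3 : |f s - f (c t)| < ε := h1 h (hd.trans_le (min_le_left _ _))
      have := abs_lt.1 h3
      constructor <;> linarith [this.1, this.2]
  have key : ∀ ε > (0:ℝ), ∀ᶠ n in atTop,
      fm (c t) - ε ≤ fn n (cn n t) ∧ fn n (cn n t) ≤ f (c t) + ε := by
    intro ε hε
    obtain ⟨δ, hδ, hl⟩ := loc (ε / 2) (half_pos hε)
    obtain ⟨N, hN⟩ := hconv (min (ε / 2) (δ / 2)) (lt_min (half_pos hε) (half_pos hδ))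
    filter_upwards [eventually_ge_atTop N,
      Metric.tendstoUniformlyOn_iff.1 hcn_conv (δ / 2) (half_pos hδ)] with n hn hcn
    obtain ⟨hcont, -, h0, h1, -⟩ := hα n
    have hmem : cn n t ∈ Set.Icc (α n 0) (α n 1) := by
      rw [h0, h1]; exact hcn_range n t ht
    obtain ⟨s, hs, hse⟩ := intermediate_value_Icc zero_le_one hcont hmem
    obtain ⟨ha, hb⟩ := hN n hn s hs
    rw [hse] at ha hb
    have hc := hcn t ht
    rw [Real.dist_eq] at hc
    have hb' := abs_lt.1 (hb.trans_le (min_le_right _ _))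
    have ha' := abs_lt.1 (ha.trans_le (min_le_left _ _))
    have hc' := abs_lt.1 hc
    have := hl s hs (abs_lt.2 ⟨by linarith [hb'.1, hb'.2, hc'.1, hc'.2],
      by linarith [hb'.1, hb'.2, hc'.1, hc'.2]⟩)
    constructor <;> linarith [this.1, this.2, ha'.1, ha'.2]
  have bU : IsBoundedUnder (· ≤ ·) atTop (fun n => fn n (cn n t)) :=
    isBoundedUnder_of_eventually_le ((key 1 one_pos).mono fun n h => h.2)
  have bL : IsBoundedUnder (· ≥ ·) atTop (fun n => fn n (cn n t)) :=
    isBoundedUnder_of_eventually_ge ((key 1 one_pos).mono fun n h => h.1)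
  refine ⟨?_, liminf_le_limsup bU bL, ?_⟩
  · refine le_of_forall_pos_le_add fun ε hε => ?_
    have := le_liminf_of_le bU.isCoboundedUnder_ge ((key ε hε).mono fun n h => h.1)
    linarith
  · refine le_of_forall_pos_le_add fun ε hε => ?_
    exact limsup_le_of_le bL.isCoboundedUnder_le ((key ε hε).mono fun n h => h.2)
end
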